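/- Every k-outerplanar graph has treewidth at most 3k − 1. -/

import Mathlib

open SimpleGraph

/-- A planar (straight-line) embedding of a graph in the plane: vertices are
mapped injectively to points, edges are drawn as straight segments (by Fáry's
theorem this is no loss of generality for simple planar graphs), distinct edges
meet only in common endpoints, and no vertex lies in the interior of an edge. -/
structure StraightEmbedding {V : Type} (G : SimpleGraph V) where
  pos : V → ℝ × ℝ
  inj : Function.Injective pos
  no_cross : ∀ a b c d : V, G.Adj a b → G.Adj c d → (s(a, b) : Sym2 V) ≠ s(c, d) →
    segment ℝ (pos a) (pos b) ∩ segment ℝ (pos c) (pos d) ⊆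
      pos '' (({a, b} : Set V) ∩ ({c, d} : Set V))
  vertex_off_edge : ∀ v a b : V, G.Adj a b → v ≠ a → v ≠ b →
    pos v ∉ segment ℝ (pos a) (pos b)

/-- A vertex lies on the outer (exterior) face of an embedding iff some ray
from it reaches infinity without crossing the drawing. -/
def OnOuterFace {V : Type} {G : SimpleGraph V} (emb : StraightEmbedding G) (v : V) : Prop :=
  ∃ d : ℝ × ℝ, d ≠ 0 ∧ ∀ t : ℝ, 0 < t → ∀ a b : V, G.Adj a b →
    emb.pos v + t • d ∉ segment ℝ (emb.pos a) (emb.pos b)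

/-- `IsKOuterplanar k V G`: `G` admits a `k`-outerplanar embedding. A
`1`-outerplanar embedding is planar with all vertices on the outer face; a
`k`-outerplanar embedding (`k ≥ 2`) is planar such that deleting the vertices
on the outer face leaves a `(k-1)`-outerplanar graph. -/
def IsKOuterplanar : ℕ → ∀ (V : Type), SimpleGraph V → Prop
  | 0, _, _ => False
  | 1, _, G => ∃ emb : StraightEmbedding G, ∀ v, OnOuterFace emb v
  | (k + 2), _, G => ∃ emb : StraightEmbedding G,
      IsKOuterplanar (k + 1) _ (G.induce {v | ¬ OnOuterFace emb v})

/-- A tree decomposition of `G` with index (node) type `ι`. -/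
structure TreeDecomp {V : Type} (G : SimpleGraph V) (ι : Type) where
  tree : SimpleGraph ι
  isTree : tree.IsTree
  bag : ι → Set V
  mem_bag : ∀ v : V, ∃ t, v ∈ bag t
  edge_bag : ∀ a b : V, G.Adj a b → ∃ t, a ∈ bag t ∧ b ∈ bag t
  coherence : ∀ v : V, (tree.induce {t | v ∈ bag t}).Connected

/-- `G` has treewidth at most `k`: some tree decomposition has all bags of
size at most `k + 1`. -/
def TreewidthLE {V : Type} (G : SimpleGraph V) (k : ℕ) : Prop :=
  ∃ (ι : Type) (D : TreeDecomp G ι), ∀ t, (D.bag t).ncard ≤ k + 1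

/-! Induct on the layers: if the graph minus its outer vertices has a tree decomposition with bags
of size at most `n`, then the whole graph has one with bags of size at most `n + 3`. After a generic
shear, the outer vertices are joined to infinity by rays with distinct ends; the mod-2 crossing
numbers of these rays give, in the 2-connected case, a cyclic order of the outer vertices in which
no two disjoint connected sets alternate. Splitting along chords and small separations leaves the
case of a cycle of outer vertices around a connected interior. There the root bag of the interior
is extended by three vertices of the cycle, as in a triangulation of a polygon, and each part of the
interior below the bag only touches an arc of the cycle, on which one recurses. -/

namespace KOuterplanar

/-! ### Connectivity -/

section Connectivity

variable {V : Type*} {H : SimpleGraph V}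

/-- The vertex set `A` induces a connected (in particular nonempty) subgraph of `H`. -/
def ConnectedOn (H : SimpleGraph V) (A : Set V) : Prop := (H.induce A).Connected

/-- `C` is the vertex set of a connected component of the subgraph of `H` induced by `X`. -/
structure IsComponent (H : SimpleGraph V) (X C : Set V) : Prop where
  connectedOn : ConnectedOn H C
  subset : C ⊆ X
  mem_of_adj : ∀ u ∈ C, ∀ v ∈ X, H.Adj u v → v ∈ C

/-- The vertices of `Y` outside `C` that have a neighbour in `C`. -/
def boundary (H : SimpleGraph V) (Y C : Set V) : Set V :=
  {y | y ∈ Y ∧ y ∉ C ∧ ∃ x ∈ C, H.Adj x y}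

namespace ConnectedOn

variable {A B C : Set V}

theorem nonempty (hA : ConnectedOn H A) : A.Nonempty :=
  Set.nonempty_coe_sort.1 (Connected.nonempty hA)

theorem subset_of_closed (hA : ConnectedOn H A) (hAC : (A ∩ C).Nonempty)
    (hC : ∀ u ∈ C, ∀ v ∈ A, H.Adj u v → v ∈ C) : A ⊆ C := by
  obtain ⟨a, haA, haC⟩ := hAC
  intro b hb
  obtain ⟨p⟩ := hA.preconnected ⟨a, haA⟩ ⟨b, hb⟩
  suffices ∀ {x y : A} (_ : (H.induce A).Walk x y), x.1 ∈ C → y.1 ∈ C from this p haC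
  intro x y p
  induction p with
  | nil => exact id
  | cons hadj _ ih => exact fun hx => ih (hC _ hx _ (Subtype.coe_prop _) hadj)

theorem of_closed (hA : A.Nonempty)
    (h : ∀ T ⊆ A, T.Nonempty → (∀ x ∈ T, ∀ y ∈ A, H.Adj x y → y ∈ T) → A ⊆ T) :
    ConnectedOn H A := by
  have := hA.to_subtype
  refine ⟨fun x y => ?_⟩
  have hsub := h {z | ∃ hz : z ∈ A, (H.induce A).Reachable x ⟨z, hz⟩} (fun z hz => hz.1)
    ⟨x, x.2, .refl x⟩
    fun u ⟨hu, hxu⟩ v hv huv => ⟨hv, hxu.trans (Adj.reachable (G := H.induce A) huv)⟩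
  exact (hsub y.2).2

theorem singleton (v : V) : ConnectedOn H {v} :=
  ⟨.of_subsingleton⟩

theorem union_of_adj (hA : ConnectedOn H A) (hB : ConnectedOn H B) {a b : V} (ha : a ∈ A)
    (hb : b ∈ B) (hab : H.Adj a b) : ConnectedOn H (A ∪ B) :=
  connected_induce_union hA.preconnected hB.preconnected ha hb hab

theorem insert_of_adj (hA : ConnectedOn H A) {a b : V} (ha : a ∈ A) (hab : H.Adj a b) :
    ConnectedOn H (insert b A) := by
  simpa only [Set.union_singleton] using hA.union_of_adj (singleton b) ha rfl hab

theorem exists_adj_of_ssubset (hA : ConnectedOn H A) (hC : C.Nonempty) (hCA : C ⊂ A) :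
    ∃ x ∈ C, ∃ y ∈ A \ C, H.Adj x y := by
  by_contra! hcon
  refine hCA.not_subset (hA.subset_of_closed ?_ (by grind))
  rwa [Set.inter_eq_self_of_subset_right hCA.subset]

theorem mono {H' : SimpleGraph V} (hle : H ≤ H') (hA : ConnectedOn H A) : ConnectedOn H' A :=
  Connected.mono (comap_monotone _ hle) hA

theorem image {W : Type*} {K : SimpleGraph W} (f : H →g K) (hA : ConnectedOn H A) :
    ConnectedOn K (f '' A) :=
  Connected.map (induceHom f (Set.mapsTo_image f A))
    ((Set.mapsTo_image f A).restrict_surjective_iff.2 (Set.surjOn_image f A)) hA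

end ConnectedOn

namespace IsComponent

variable {X C D A : Set V}

theorem nonempty (hC : IsComponent H X C) : C.Nonempty := hC.connectedOn.nonempty

theorem subset_of_connectedOn (hC : IsComponent H X C) (hA : ConnectedOn H A) (hAX : A ⊆ X)
    (hAC : (A ∩ C).Nonempty) : A ⊆ C :=
  hA.subset_of_closed hAC fun u hu v hv => hC.mem_of_adj u hu v (hAX hv)

theorem eq_of_mem (hC : IsComponent H X C) (hD : IsComponent H X D) {a : V} (haC : a ∈ C)
    (haD : a ∈ D) : C = D :=
  Set.Subset.antisymm (hD.subset_of_connectedOn hC.connectedOn hC.subset ⟨a, haC, haD⟩)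
    (hC.subset_of_connectedOn hD.connectedOn hD.subset ⟨a, haD, haC⟩)

theorem disjoint (hC : IsComponent H X C) (hD : IsComponent H X D) (hne : C ≠ D) :
    Disjoint C D :=
  Set.disjoint_left.2 fun _ haC haD => hne (hC.eq_of_mem hD haC haD)

theorem not_adj (hC : IsComponent H X C) (hD : IsComponent H X D) (hne : C ≠ D) :
    ∀ u ∈ C, ∀ v ∈ D, ¬ H.Adj u v := fun u hu v hv huv =>
  Set.disjoint_left.1 (hC.disjoint hD hne) (hC.mem_of_adj u hu v (hD.subset hv) huv) hv

theorem boundary_subset {Y L : Set V} (hD : IsComponent H (C \ L) D) :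
    boundary H Y D ⊆ boundary H Y C ∪ C ∩ L := by
  rintro y ⟨hyY, hyD, x, hx, hxy⟩
  by_cases hyC : y ∈ C
  · exact .inr ⟨hyC, by_contra fun hyL => hyD (hD.mem_of_adj x hx y ⟨hyC, hyL⟩ hxy)⟩
  · exact .inl ⟨hyY, hyC, x, (hD.subset hx).1, hxy⟩

theorem of_diff (hC : IsComponent H X C) (hD : IsComponent H (X \ C) D) : IsComponent H X D where
  connectedOn := hD.connectedOn
  subset := hD.subset.trans Set.sdiff_subset
  mem_of_adj u hu v hv huv := by
    refine hD.mem_of_adj u hu v ⟨hv, fun hvC => ?_⟩ huv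
    exact (hD.subset hu).2 (hC.mem_of_adj v hvC u (hD.subset hu).1 huv.symm)

end IsComponent

theorem exists_isComponent_mem {X : Set V} {x : V} (hx : x ∈ X) :
    ∃ C, IsComponent H X C ∧ x ∈ C := by
  let C : Set V := ⋃₀ {A | ConnectedOn H A ∧ A ⊆ X ∧ x ∈ A}
  have hC : ConnectedOn H C := by
    refine induce_sUnion_connected_of_pairwise_not_disjoint
      ⟨{x}, .singleton x, Set.singleton_subset_iff.2 hx, rfl⟩ ?_ fun hA => hA.1
    exact fun hA hB => ⟨x, hA.2.2, hB.2.2⟩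
  have hxC : x ∈ C := ⟨{x}, ⟨.singleton x, Set.singleton_subset_iff.2 hx, rfl⟩, rfl⟩
  have hCX : C ⊆ X := Set.sUnion_subset fun A hA => hA.2.1
  refine ⟨C, ⟨hC, hCX, fun u hu v hv huv => ?_⟩, hxC⟩
  exact ⟨insert v C, ⟨hC.insert_of_adj hu huv, Set.insert_subset hv hCX, .inr hxC⟩, .inl rfl⟩

theorem ConnectedOn.union_of_components {R X : Set V} (hR : ConnectedOn H R)
    (h : ∀ C, IsComponent H X C → ∃ a ∈ R, ∃ b ∈ C, H.Adj a b) : ConnectedOn H (R ∪ X) := by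
  obtain ⟨r, hr⟩ := hR.nonempty
  refine induce_connected_of_patches r (.inl hr) ?_
  rintro v (hvR | hvX)
  · exact ⟨R, Set.subset_union_left, hr, hvR, hR.preconnected _ _⟩
  · obtain ⟨C, hC, hvC⟩ := exists_isComponent_mem (H := H) hvX
    obtain ⟨a, ha, b, hb, hab⟩ := h C hC
    exact ⟨R ∪ C, Set.union_subset_union_right R hC.subset, .inl hr, .inr hvC,
      (hR.union_of_adj hC.connectedOn ha hb hab).preconnected _ _⟩

end Connectivity

/-! ### Decomposable sets -/

/-- `Decomposable H n X B`: the vertices of `X` can be placed in the nodes below a bag containing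
`B` of a tree decomposition of `H`, every bag in which a vertex of `X` is introduced having at most
`n` elements. This is the inductive counterpart of a rooted tree decomposition of width `n - 1`. -/
inductive Decomposable {V : Type*} (H : SimpleGraph V) (n : ℕ) : Set V → Set V → Prop
  | empty (B : Set V) : Decomposable H n ∅ B
  | introduce {v : V} {X B : Set V} (hv : v ∉ X) (hcard : (insert v B).ncard ≤ n)
      (h : Decomposable H n X (insert v B)) : Decomposable H n (insert v X) B
  | forget {X B B' : Set V} (hB : B' ⊆ B) (hadj : ∀ x ∈ X, ∀ y ∈ B, H.Adj x y → y ∈ B')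
      (h : Decomposable H n X B') : Decomposable H n X B
  | union {X Y B : Set V} (hXY : Disjoint X Y) (hadj : ∀ x ∈ X, ∀ y ∈ Y, ¬ H.Adj x y)
      (hX : Decomposable H n X B) (hY : Decomposable H n Y B) : Decomposable H n (X ∪ Y) B

namespace Decomposable

variable {V : Type*} {H : SimpleGraph V} {n : ℕ} {X B : Set V}

theorem of_adj_imp {H' : SimpleGraph V} (h : Decomposable H n X B)
    (hadj : ∀ x ∈ X, ∀ y ∈ X ∪ B, H'.Adj x y → H.Adj x y) : Decomposable H' n X B := by
  induction h with
  | empty B => exact .empty B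
  | introduce hv hcard _ ih => exact .introduce hv hcard (ih (by grind))
  | forget hB hB' _ ih =>
    exact .forget hB (fun x hx y hy hxy => hB' x hx y hy (hadj x hx y (.inr hy) hxy))
      (ih (by grind))
  | union hXY hnadj _ _ ihX ihY =>
    exact .union hXY
      (fun x hx y hy hxy => hnadj x hx y hy (hadj x (.inl hx) y (.inl (.inr hy)) hxy))
      (ihX (by grind)) (ihY (by grind))

theorem map_induce {s : Set V} {X B : Set s} (h : Decomposable (H.induce s) n X B) :
    Decomposable H n (Subtype.val '' X) (Subtype.val '' B) := by
  induction h with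
  | empty B => rw [Set.image_empty]; exact .empty _
  | introduce hv hcard _ ih =>
    rw [Set.image_insert_eq] at ih ⊢
    refine .introduce (fun hv' => hv (Subtype.val_injective.mem_set_image.1 hv')) ?_ ih
    rwa [← Set.image_insert_eq, Set.ncard_image_of_injective _ Subtype.val_injective]
  | forget hB hadj _ ih =>
    refine .forget (Set.image_mono hB) ?_ ih
    rintro _ ⟨x, hx, rfl⟩ _ ⟨y, hy, rfl⟩ hxy
    exact ⟨y, hadj x hx y hy hxy, rfl⟩
  | union hXY hadj _ _ ihX ihY =>
    rw [Set.image_union]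
    refine .union ((Set.disjoint_image_iff Subtype.val_injective).2 hXY) ?_ ihX ihY
    rintro _ ⟨x, hx, rfl⟩ _ ⟨y, hy, rfl⟩ hxy
    exact hadj x hx y hy hxy

theorem union_bag {k : ℕ} {Q : Set V} (h : Decomposable H n X B) (hQ : Q.ncard ≤ k) :
    Decomposable H (n + k) X (B ∪ Q) := by
  induction h with
  | empty B => exact .empty _
  | introduce hv hcard _ ih =>
    rw [Set.insert_union] at ih
    refine .introduce hv ?_ ih
    rw [← Set.insert_union]
    exact (Set.ncard_union_le _ _).trans (by omega)
  | @forget X B B' hB hadj _ ih =>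
    exact .forget (B' := B' ∪ Q) (Set.union_subset_union_left Q hB) (by grind) ih
  | union hXY hadj _ _ ihX ihY => exact .union hXY hadj ihX ihY

theorem mono {m : ℕ} (h : Decomposable H n X B) (hnm : n ≤ m) : Decomposable H m X B := by
  have := h.union_bag (k := m - n) (Q := ∅) (by simp)
  rwa [Nat.add_sub_cancel' hnm, Set.union_empty] at this

section Finite

variable [Finite V]

theorem inter (h : Decomposable H n X B) (U : Set V) : Decomposable H n (X ∩ U) (B ∩ U) := by
  induction h with
  | empty B => rw [Set.empty_inter]; exact .empty _
  | @introduce v X B hv hcard _ ih =>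
    by_cases hvU : v ∈ U
    · rw [Set.insert_inter_of_mem hvU] at ih ⊢
      have hsub : insert v (B ∩ U) ⊆ insert v B := Set.insert_subset_insert Set.inter_subset_left
      exact .introduce (fun h => hv h.1) ((Set.ncard_le_ncard hsub).trans hcard) ih
    · rwa [Set.insert_inter_of_notMem hvU] at ih ⊢
  | forget hB hadj _ ih => exact .forget (Set.inter_subset_inter_left U hB) (by grind) ih
  | union hXY hadj _ _ ihX ihY =>
    rw [Set.union_inter_distrib_right]
    exact .union (hXY.mono Set.inter_subset_left Set.inter_subset_left) (by grind) ihX ihY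

theorem introduce_set {Z Q F : Set V} (h : Decomposable H n Z (Q ∪ F)) (hZF : Disjoint Z F)
    (hcard : (Q ∪ F).ncard ≤ n) : Decomposable H n (Z ∪ F) Q := by
  induction F, F.toFinite using Set.Finite.induction_on generalizing Q with
  | empty => simpa only [Set.union_empty] using h
  | @insert a F ha _ ih =>
    rw [Set.disjoint_insert_right] at hZF
    have hQ : insert a Q ∪ F = Q ∪ insert a F := by rw [Set.insert_union, Set.union_insert]
    rw [Set.union_insert]
    refine .introduce (by grind) ((Set.ncard_le_ncard ?_).trans hcard)
      (ih (by rwa [hQ]) hZF.2 (by rwa [hQ]))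
    rw [Set.union_insert]
    exact Set.insert_subset_insert Set.subset_union_left

theorem of_components (h : ∀ D, IsComponent H X D → Decomposable H n D B) :
    Decomposable H n X B := by
  induction hm : X.ncard using Nat.strong_induction_on generalizing X with
  | _ m ih =>
    obtain rfl | ⟨x, hx⟩ := X.eq_empty_or_nonempty
    · exact .empty _
    obtain ⟨C, hC, hxC⟩ := exists_isComponent_mem (H := H) hx
    have hcard : (X \ C).ncard < m :=
      hm ▸ Set.ncard_lt_ncard ⟨Set.sdiff_subset, fun hX => (hX hx).2 hxC⟩
    rw [← Set.union_sdiff_cancel hC.subset]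
    refine .union Set.disjoint_sdiff_right ?_ (h C hC)
      (ih _ hcard (fun D hD => h D (hC.of_diff hD)) rfl)
    exact fun u hu v hv huv => hv.2 (hC.mem_of_adj u hu v hv.1 huv)

section Reroot

variable {U Q : Set V}

theorem diff_of_subset_bag (hX : Decomposable H n X B)
    (hU : Decomposable H n (U \ (X ∪ B)) B) (hXU : X ∪ B ⊆ U) (hXB : Disjoint X B)
    (hadj : ∀ x ∈ X, ∀ y ∈ U \ (X ∪ B), ¬ H.Adj x y) (hcard : B.ncard ≤ n) (hQ : Q ⊆ B) :
    Decomposable H n (U \ Q) Q := by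
  have hQB : Q ∪ B \ Q = B := Set.union_sdiff_cancel hQ
  rw [← hQB] at hcard
  have h := hX.union (by grind) hadj hU
  rw [← hQB] at h
  convert h.introduce_set (by grind) hcard using 1
  grind

theorem diff_clique_aux (hX : Decomposable H n X B) (hQ : H.IsClique Q)
    (hU : Decomposable H n (U \ (X ∪ B)) B) (hXU : X ∪ B ⊆ U) (hXB : Disjoint X B)
    (hadj : ∀ x ∈ X, ∀ y ∈ U \ (X ∪ B), ¬ H.Adj x y) (hcard : B.ncard ≤ n) (hQX : Q ⊆ X ∪ B) :
    Decomposable H n (U \ Q) Q := by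
  induction hX with
  | empty B =>
    exact (empty B).diff_of_subset_bag hU hXU hXB hadj hcard (by rwa [Set.empty_union] at hQX)
  | @introduce v X B hv hc _ ih =>
    have hU' : Decomposable H n (U \ (X ∪ insert v B)) (insert v B) := by
      rw [Set.union_insert, ← Set.insert_union]
      exact .forget (Set.subset_insert v B) (by grind [H.adj_comm]) hU
    exact ih hU' (by grind) (by grind) (by grind) hc (by grind)
  | @forget X B B' hB hB' hX ih =>
    by_cases hQX' : Disjoint Q X
    · exact (hX.forget hB hB').diff_of_subset_bag hU hXU hXB hadj hcard (by grind)
    · obtain ⟨q, hqQ, hqX⟩ := Set.not_disjoint_iff.1 hQX'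
      have hQB' : Q ⊆ X ∪ B' := fun a ha => (hQX ha).imp_right fun haB =>
        hB' q hqX a haB (hQ hqQ ha (by grind))
      have hU' : Decomposable H n (U \ (X ∪ B')) B' := by
        have hBB' : B' ∪ B \ B' = B := Set.union_sdiff_cancel hB
        rw [← hBB'] at hU hcard
        convert hU.introduce_set (by grind) hcard using 1
        grind
      exact ih hU' (by grind) (by grind) (by grind) ((Set.ncard_le_ncard hB).trans hcard) hQB'
  | @union X Y B hXY hnadj hX hY ihX ihY =>
    by_cases hQX' : Disjoint Q X
    · have hU' : Decomposable H n (U \ (Y ∪ B)) B := by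
        convert hX.union (by grind) (fun x hx => hadj x (.inl hx)) hU using 1
        grind
      exact ihY hU' (by grind) (by grind) (by grind [H.adj_comm]) hcard (by grind)
    · obtain ⟨q, hqQ, hqX⟩ := Set.not_disjoint_iff.1 hQX'
      have hQXB : Q ⊆ X ∪ B := fun a ha => (hQX ha).imp_left fun haXY =>
        haXY.resolve_right fun haY => hnadj q hqX a haY (hQ hqQ ha (by grind))
      have hU' : Decomposable H n (U \ (X ∪ B)) B := by
        convert hY.union (by grind) (fun x hx => hadj x (.inr hx)) hU using 1
        grind
      exact ihX hU' (by grind) (by grind) (by grind) hcard hQXB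

theorem diff_clique (hU : Decomposable H n U ∅) (hQ : H.IsClique Q) (hQU : Q ⊆ U) :
    Decomposable H n (U \ Q) Q := by
  refine hU.diff_clique_aux hQ ?_ ?_ ?_ ?_ ?_ ?_ <;>
    simp [hQU, Decomposable.empty]

end Reroot

theorem exists_root {Y C : Set V} (h : Decomposable H n X B) (hXB : Disjoint X B)
    (hC : ConnectedOn H C) (hCX : C ⊆ X) (hCB : boundary H Y C ⊆ B) :
    ∃ v ∈ C, (insert v (boundary H Y C)).ncard ≤ n ∧
      ∀ D, IsComponent H (C \ {v}) D → Decomposable H n D (boundary H Y D) := by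
  induction h with
  | empty B =>
    obtain ⟨c, hc⟩ := hC.nonempty
    exact (hCX hc).elim
  | @introduce v X B hv hcard hX ih =>
    by_cases hvC : v ∈ C
    · refine ⟨v, hvC, (Set.ncard_le_ncard (Set.insert_subset_insert hCB)).trans hcard, ?_⟩
      intro D hD
      have hDX : D ⊆ X := by grind [hD.subset]
      have hDB : boundary H Y D ⊆ insert v B := by
        rintro y ⟨hyY, hyD, x, hx, hxy⟩
        have hyC : y ≠ v → y ∉ C := fun hyv hyC => hyD (hD.mem_of_adj x hx y ⟨hyC, hyv⟩ hxy)
        by_cases hyv : y = v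
        · exact .inl hyv
        · exact .inr (hCB ⟨hyY, hyC hyv, x, (hD.subset hx).1, hxy⟩)
      have : Disjoint D (boundary H Y D) := Set.disjoint_right.2 fun y hy => hy.2.1
      convert hX.inter (D ∪ boundary H Y D) using 1 <;> grind
    · exact ih (by grind) (by grind) (by grind)
  | forget hB hadj _ ih =>
    refine ih (hXB.mono_right hB) hCX fun y hy => ?_
    obtain ⟨x, hx, hxy⟩ := hy.2.2
    exact hadj x (hCX hx) y (hCB hy) hxy
  | @union X Z B _ hadj _ _ ihX ihZ =>
    by_cases hCX' : Disjoint C X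
    · exact ihZ (by grind) (by grind) hCB
    · rw [Set.not_disjoint_iff_nonempty_inter] at hCX'
      exact ihX (by grind) (hC.subset_of_closed hCX' (by grind)) hCB

end Finite

end Decomposable

/-! ### From decomposable sets to tree decompositions -/

section Tree

variable {V W : Type*} {G : SimpleGraph V} {H : SimpleGraph W}

theorem reachable_comap_of_closed {f : V → W} (hf : f.Injective)
    (hclosed : ∀ v w, H.Adj (f v) w → w ∈ Set.range f) {a b : V} (h : H.Reachable (f a) (f b)) :
    (H.comap f).Reachable a b := by
  obtain ⟨p⟩ := h
  suffices ∀ {x y : W} (_ : H.Walk x y) {a b : V}, x = f a → y = f b →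
      (H.comap f).Reachable a b from this p rfl rfl
  intro x y p
  induction p with
  | nil => rintro a b rfl h; exact hf h ▸ .refl _
  | cons hadj _ ih =>
    rintro a b rfl rfl
    obtain ⟨c, rfl⟩ := hclosed _ _ hadj
    exact (Adj.reachable (G := H.comap f) hadj).trans (ih rfl rfl)

theorem isBridge_of_closed {f : V → W} (hf : f.Injective)
    (hclosed : ∀ v w, H.Adj (f v) w → w ∈ Set.range f) {a b : V}
    (h : (H.comap f).IsBridge s(a, b)) : H.IsBridge s(f a, f b) := by
  rw [isBridge_iff] at h ⊢
  refine fun hreach => h ((reachable_comap_of_closed hf ?_ hreach).mono ?_)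
  · exact fun v w hvw => hclosed v w hvw.1
  · intro u v huv
    simpa [hf.eq_iff] using huv

theorem isAcyclic_sum (hG : G.IsAcyclic) (hH : H.IsAcyclic) : (G ⊕g H).IsAcyclic := by
  rw [isAcyclic_iff_forall_adj_isBridge] at *
  rintro (a | a) (b | b) hab
  · exact isBridge_of_closed Sum.inl_injective (by simp) (hG hab)
  · exact absurd hab (by simp)
  · exact absurd hab (by simp)
  · exact isBridge_of_closed Sum.inr_injective (by simp) (hH hab)

theorem isTree_sum_sup_edge (hG : G.IsTree) (hH : H.IsTree) (a : V) (b : W) :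
    ((G ⊕g H) ⊔ edge (Sum.inl a) (Sum.inr b)).IsTree where
  connected := hG.connected.sum_sup_edge hH.connected
  isAcyclic := (isAcyclic_sum hG.isAcyclic hH.isAcyclic).sup_edge_of_not_reachable
    (not_reachable_sum_inl_inr a b)

end Tree

/-- A tree decomposition of the subgraph of `H` induced by `U`, with a root node whose bag is `B`
and all bags not contained in the root bag of size at most `n`. -/
structure RootedTreeDecomp {V : Type*} (H : SimpleGraph V) (n : ℕ) (U B : Set V)
    (ι : Type*) where
  tree : SimpleGraph ι
  isTree : tree.IsTree
  root : ι
  bag : ι → Set V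
  bag_root : bag root = B
  bag_subset : ∀ t, bag t ⊆ U
  bag_subset_or_card_le : ∀ t, bag t ⊆ B ∨ (bag t).ncard ≤ n
  exists_bag_of_adj : ∀ a ∈ U, ∀ b ∈ U, H.Adj a b → ∃ t, a ∈ bag t ∧ b ∈ bag t
  connectedOn_bag : ∀ v ∈ U, ConnectedOn tree {t | v ∈ bag t}

namespace RootedTreeDecomp

variable {V ι κ : Type*} {H : SimpleGraph V} {n : ℕ} {U B U₁ U₂ B₁ B₂ : Set V}

/-- The rooted tree decomposition with a single node. -/
def leaf (H : SimpleGraph V) (n : ℕ) (B : Set V) : RootedTreeDecomp H n B B Unit where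
  tree := ⊥
  isTree := .of_subsingleton
  root := ()
  bag _ := B
  bag_root := rfl
  bag_subset _ := subset_rfl
  bag_subset_or_card_le _ := .inl subset_rfl
  exists_bag_of_adj _ ha _ hb _ := ⟨(), ha, hb⟩
  connectedOn_bag v hv := by
    convert ConnectedOn.singleton () using 1
    exact Set.eq_singleton_iff_unique_mem.2 ⟨hv, fun _ _ => rfl⟩

theorem connectedOn_elim_bag (D₁ : RootedTreeDecomp H n U₁ B₁ ι)
    (D₂ : RootedTreeDecomp H n U₂ B₂ κ) (hU : U₁ ∩ U₂ ⊆ B₁ ∩ B₂) {v : V} (hv : v ∈ U₁ ∪ U₂) :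
    ConnectedOn ((D₁.tree ⊕g D₂.tree) ⊔ edge (Sum.inl D₁.root) (Sum.inr D₂.root))
      {t | v ∈ Sum.elim D₁.bag D₂.bag t} := by
  have hset : {t | v ∈ Sum.elim D₁.bag D₂.bag t} =
      Sum.inl '' {t | v ∈ D₁.bag t} ∪ Sum.inr '' {t | v ∈ D₂.bag t} := by
    ext (t | t) <;> simp
  have hleft (hv₁ : v ∈ U₁) : ConnectedOn (D₁.tree ⊕g D₂.tree) (Sum.inl '' {t | v ∈ D₁.bag t}) :=
    (D₁.connectedOn_bag v hv₁).image Embedding.sumInl.toHom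
  have hright (hv₂ : v ∈ U₂) : ConnectedOn (D₁.tree ⊕g D₂.tree) (Sum.inr '' {t | v ∈ D₂.bag t}) :=
    (D₂.connectedOn_bag v hv₂).image Embedding.sumInr.toHom
  rw [hset]
  by_cases hv₁ : v ∈ U₁ <;> by_cases hv₂ : v ∈ U₂
  · have hvB := hU ⟨hv₁, hv₂⟩
    refine ((hleft hv₁).mono le_sup_left).union_of_adj ((hright hv₂).mono le_sup_left)
      (a := Sum.inl D₁.root) (b := Sum.inr D₂.root) ?_ ?_ (by simp [edge_adj])
    · exact Set.mem_image_of_mem _ (D₁.bag_root.symm.subset hvB.1)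
    · exact Set.mem_image_of_mem _ (D₂.bag_root.symm.subset hvB.2)
  · have hempty : {t | v ∈ D₂.bag t} = ∅ :=
      Set.eq_empty_of_forall_notMem fun t ht => hv₂ (D₂.bag_subset t ht)
    rw [hempty, Set.image_empty, Set.union_empty]
    exact (hleft hv₁).mono le_sup_left
  · have hempty : {t | v ∈ D₁.bag t} = ∅ :=
      Set.eq_empty_of_forall_notMem fun t ht => hv₁ (D₁.bag_subset t ht)
    rw [hempty, Set.image_empty, Set.empty_union]
    exact (hright hv₂).mono le_sup_left
  · exact absurd hv (by simp [hv₁, hv₂])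

/-- The decomposition obtained by joining the roots of two decompositions by an edge. -/
def join [Finite V] (D₁ : RootedTreeDecomp H n U₁ B₁ ι) (D₂ : RootedTreeDecomp H n U₂ B₂ κ)
    (hU : U₁ ∩ U₂ ⊆ B₁ ∩ B₂) (hB : B₂ ⊆ B₁ ∨ B₂.ncard ≤ n)
    (hadj : ∀ a ∈ U₁ \ U₂, ∀ b ∈ U₂ \ U₁, ¬ H.Adj a b) :
    RootedTreeDecomp H n (U₁ ∪ U₂) B₁ (ι ⊕ κ) where
  tree := (D₁.tree ⊕g D₂.tree) ⊔ edge (Sum.inl D₁.root) (Sum.inr D₂.root)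
  isTree := isTree_sum_sup_edge D₁.isTree D₂.isTree _ _
  root := .inl D₁.root
  bag := Sum.elim D₁.bag D₂.bag
  bag_root := D₁.bag_root
  bag_subset := by
    rintro (t | t)
    exacts [(D₁.bag_subset t).trans Set.subset_union_left,
      (D₂.bag_subset t).trans Set.subset_union_right]
  bag_subset_or_card_le := by
    rintro (t | t)
    · exact D₁.bag_subset_or_card_le t
    · refine (D₂.bag_subset_or_card_le t).elim (fun ht => ?_) .inr
      exact hB.imp ht.trans (Set.ncard_le_ncard ht).trans
  exists_bag_of_adj a ha b hb hab := by
    have hcase : a ∈ U₁ ∧ b ∈ U₁ ∨ a ∈ U₂ ∧ b ∈ U₂ := by grind [H.adj_comm]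
    obtain ⟨ha, hb⟩ | ⟨ha, hb⟩ := hcase
    · exact (D₁.exists_bag_of_adj a ha b hb hab).imp' Sum.inl fun _ => id
    · exact (D₂.exists_bag_of_adj a ha b hb hab).imp' Sum.inr fun _ => id
  connectedOn_bag _ hv := D₁.connectedOn_elim_bag D₂ hU hv

end RootedTreeDecomp

namespace Decomposable

variable {n : ℕ}

theorem exists_rootedTreeDecomp {V : Type*} [Finite V] {H : SimpleGraph V} {X B : Set V}
    (h : Decomposable H n X B) (hXB : Disjoint X B) :
    ∃ ι : Type, Nonempty (RootedTreeDecomp H n (X ∪ B) B ι) := by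
  induction h with
  | empty B => exact ⟨Unit, ⟨by rw [Set.empty_union]; exact .leaf H n B⟩⟩
  | @introduce v X B hv hcard _ ih =>
    obtain ⟨ι, ⟨D⟩⟩ := ih (by grind)
    have D' := (RootedTreeDecomp.leaf H n B).join D (by grind) (.inr hcard) (by grind)
    have hU : B ∪ (X ∪ insert v B) = insert v X ∪ B := by grind
    exact ⟨_, ⟨hU ▸ D'⟩⟩
  | @forget X B B' hB hadj _ ih =>
    obtain ⟨ι, ⟨D⟩⟩ := ih (by grind)
    have D' := (RootedTreeDecomp.leaf H n B).join D (by grind) (.inl hB) (by grind [H.adj_comm])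
    have hU : B ∪ (X ∪ B') = X ∪ B := by grind
    exact ⟨_, ⟨hU ▸ D'⟩⟩
  | @union X Y B hXY hadj _ _ ihX ihY =>
    obtain ⟨ι, ⟨D⟩⟩ := ihX (by grind)
    obtain ⟨κ, ⟨E⟩⟩ := ihY (by grind)
    have D' := D.join E (by grind) (.inl subset_rfl) (by grind)
    have hU : (X ∪ B) ∪ (Y ∪ B) = X ∪ Y ∪ B := by grind
    exact ⟨_, ⟨hU ▸ D'⟩⟩

theorem treewidthLE {V : Type} [Finite V] {G : SimpleGraph V}
    (h : Decomposable G (n + 1) Set.univ ∅) : TreewidthLE G n := by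
  obtain ⟨ι, ⟨D⟩⟩ := h.exists_rootedTreeDecomp (Set.disjoint_empty _)
  have hmem (v : V) : v ∈ Set.univ ∪ ∅ := .inl trivial
  refine ⟨ι, ⟨D.tree, D.isTree, D.bag, fun v => ?_, fun a b => ?_, fun v => ?_⟩, fun t => ?_⟩
  · exact Set.nonempty_coe_sort.1 (D.connectedOn_bag v (hmem v)).nonempty.to_subtype
  · exact D.exists_bag_of_adj a (hmem a) b (hmem b)
  · exact D.connectedOn_bag v (hmem v)
  · exact (D.bag_subset_or_card_le t).elim
      (fun ht => (Set.ncard_le_ncard ht).trans (by simp)) id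

end Decomposable

/-! ### Splitters -/

section Splitter

variable {V : Type*} {H : SimpleGraph V} {n : ℕ} {Y C D L : Set V}

/-- `L ⊆ C` can be the set of new vertices of a bag below the bag `boundary H Y C`: the new bag is
small, and the components of `C` that remain are decomposable. -/
structure IsSplitter (H : SimpleGraph V) (n : ℕ) (Y C L : Set V) : Prop where
  subset : L ⊆ C
  nonempty : L.Nonempty
  card_le : (boundary H Y C ∪ L).ncard ≤ n
  decomposable : ∀ D, IsComponent H (C \ L) D → Decomposable H n D (boundary H Y D)

variable [Finite V]

namespace IsSplitter

theorem decomposable_of_subset {X : Set V} (hL : IsSplitter H n Y C L) (hCY : C ⊆ Y) (hX : X ⊆ C)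
    (hbX : boundary H Y X ⊆ boundary H Y C ∪ L) : Decomposable H n X (boundary H Y X) := by
  have hcomp : ∀ D, IsComponent H (X \ L) D → Decomposable H n D (boundary H Y X ∪ X ∩ L) := by
    intro D hD
    have hDC : IsComponent H (C \ L) D := by
      refine ⟨hD.connectedOn, by grind [hD.subset], fun u hu v hv huv => ?_⟩
      refine hD.mem_of_adj u hu v ⟨by_contra fun hvX => ?_, hv.2⟩ huv
      have hvb := hbX ⟨hCY hv.1, hvX, u, (hD.subset hu).1, huv⟩
      exact hvb.elim (fun hvb => hvb.2.1 hv.1) hv.2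
    refine .forget hD.boundary_subset ?_ (hL.decomposable D hDC)
    rintro x hx y (hy | hy) hxy
    · exact ⟨hy.1, fun h => hy.2.1 (hD.subset h).1, x, hx, hxy⟩
    · exact ⟨hCY (hX hy.1), fun h => (hD.subset h).2 hy.2, x, hx, hxy⟩
  have : Disjoint X (boundary H Y C) := Set.disjoint_left.2 fun x hx hxb => hxb.2.1 (hX hx)
  convert (Decomposable.of_components hcomp).introduce_set (by grind)
    ((Set.ncard_le_ncard (by grind)).trans hL.card_le) using 1
  grind

theorem mono {L' : Set V} (hL : IsSplitter H n Y C L) (hCY : C ⊆ Y) (hL' : L' ⊆ L)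
    (hne : L'.Nonempty) : IsSplitter H n Y C L' where
  subset := hL'.trans hL.subset
  nonempty := hne
  card_le := (Set.ncard_le_ncard (Set.union_subset_union_right _ hL')).trans hL.card_le
  decomposable D hD := hL.decomposable_of_subset hCY (hD.subset.trans Set.sdiff_subset)
    (hD.boundary_subset.trans (Set.union_subset_union_right _ (Set.inter_subset_right.trans hL')))

theorem exists_refinement (hL : IsSplitter H n Y C L) (hCY : C ⊆ Y)
    (hD : IsComponent H (C \ L) D) (hCD : boundary H C (Y \ C) ⊆ D) :
    ∃ L', IsSplitter H n Y C L' ∧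
      ∀ E, IsComponent H (C \ L') E → (E ∩ D).Nonempty → E ⊂ D := by
  have hbD : Disjoint D (boundary H Y D) := Set.disjoint_left.2 fun x hx hxb => hxb.2.1 hx
  obtain ⟨v, hvD, hcard, hdec⟩ := (hL.decomposable D hD).exists_root (Y := Y) hbD hD.connectedOn
    subset_rfl subset_rfl
  have hbCD : boundary H Y C ⊆ boundary H Y D := by
    rintro s ⟨hsY, hsC, x, hx, hxs⟩
    exact ⟨hsY, fun h => hsC (hD.subset h).1, x,
      hCD ⟨hx, fun h => h.2 hx, s, ⟨hsY, hsC⟩, hxs.symm⟩, hxs⟩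
  have hbDL : boundary H Y D ∩ C ⊆ L := fun y ⟨hy, hyC⟩ =>
    ((hD.boundary_subset hy).resolve_left fun h => h.2.1 hyC).2
  let L' : Set V := insert v (boundary H Y D ∩ C)
  have hmeet : ∀ E, IsComponent H (C \ L') E → (E ∩ D).Nonempty → E ⊆ D \ {v} := by
    intro E hE hED
    refine Set.subset_sdiff_singleton (hE.connectedOn.subset_of_closed hED fun u hu w hw huw => ?_)
      fun hv => (hE.subset hv).2 (.inl rfl)
    have hwC := hE.subset hw
    exact by_contra fun hwD => hwC.2 (.inr ⟨⟨hCY hwC.1, hwD, u, hu, huw⟩, hwC.1⟩)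
  refine ⟨L', ⟨by grind [hD.subset], ⟨v, .inl rfl⟩,
    (Set.ncard_le_ncard (by grind)).trans hcard, fun E hE => ?_⟩, fun E hE hED => ?_⟩
  · by_cases hED : (E ∩ D).Nonempty
    · refine hdec E ⟨hE.connectedOn, hmeet E hE hED, fun u hu w hw huw => ?_⟩
      exact hE.mem_of_adj u hu w (by grind [hD.subset]) huw
    · refine hL.decomposable_of_subset hCY (hE.subset.trans Set.sdiff_subset) fun y hy => ?_
      refine (hE.boundary_subset hy).imp_right fun hyL' => hyL'.2.elim ?_ (hbDL ·)
      rintro rfl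
      obtain ⟨x, hx, hxy⟩ := hy.2.2
      have hxC := hE.subset hx
      exact (hxC.2 (.inr ⟨⟨hCY hxC.1, fun hxD => hED ⟨x, hx, hxD⟩, y, hvD, hxy.symm⟩, hxC.1⟩)).elim
  · exact (hmeet E hE hED).trans_ssubset (Set.sdiff_singleton_ssubset.2 hvD)

theorem exists_separating_contact (hL : IsSplitter H n Y C L) (hCY : C ⊆ Y)
    (hne : (boundary H C (Y \ C)).Nonempty) :
    ∃ L', IsSplitter H n Y C L' ∧
      ∀ D, IsComponent H (C \ L') D → ¬ boundary H C (Y \ C) ⊆ D := by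
  by_contra! hcon
  obtain ⟨D, hD, hCD⟩ := hcon L hL
  induction hm : D.ncard using Nat.strong_induction_on generalizing L D with
  | _ m ih =>
    obtain ⟨L', hL', hlt⟩ := hL.exists_refinement hCY hD hCD
    obtain ⟨E, hE, hCE⟩ := hcon L' hL'
    obtain ⟨z, hz⟩ := hne
    exact ih _ (hm ▸ Set.ncard_lt_ncard (hlt E hE ⟨z, hCE hz, hCD hz⟩)) hL' E hE hCE rfl

end IsSplitter

theorem inter_boundary_nonempty_of_minimal {E : Set V}
    (hL : Minimal (fun L => IsSplitter H n Y C L ∧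
      ∀ D, IsComponent H (C \ L) D → ¬ boundary H C (Y \ C) ⊆ D) L)
    (hCY : C ⊆ Y) (hC : ConnectedOn H C) (hD : IsComponent H (C \ L) D)
    (hE : IsComponent H (C \ D) E) : (E ∩ boundary H C (Y \ C)).Nonempty := by
  obtain ⟨⟨hsplit, hsep⟩, hmin⟩ := hL
  by_contra! hEb
  have hEb' : Disjoint (boundary H C (Y \ C)) E := (Set.disjoint_iff_inter_eq_empty.2 hEb).symm
  have hDC := hD.subset
  have hEC := hE.subset
  have hsub : ∀ F ⊆ C \ (L \ E), ConnectedOn H F → (F ∩ (D ∪ E)).Nonempty → F ⊆ D ∪ E := by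
    intro F hF hFc hFDE
    refine hFc.subset_of_closed hFDE fun u hu w hw huw => by_contra fun hwDE => hwDE ?_
    have hwF := hF hw
    exact hu.imp (fun hu => hD.mem_of_adj u hu w (by grind) huw)
      fun hu => hE.mem_of_adj u hu w (by grind) huw
  obtain ⟨d, hd⟩ := hD.nonempty
  have hne : (L \ E).Nonempty := by
    by_contra! h
    have hCDE := hsub C (by rw [h, Set.sdiff_empty]) hC ⟨d, (hDC hd).1, .inl hd⟩
    exact hsep D hD (hEb'.subset_left_of_subset_union fun x hx => hCDE hx.1)
  obtain ⟨x, hx, y, hy, hxy⟩ := hC.exists_adj_of_ssubset hE.nonempty (C := E) (by grind)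
  have hyD : y ∈ D := by_contra fun h => hy.2 (hE.mem_of_adj x hx y ⟨hy.1, h⟩ hxy)
  have hxL : x ∈ L := by_contra fun h =>
    (hEC hx).2 (hD.mem_of_adj y hyD x ⟨(hEC hx).1, h⟩ hxy.symm)
  refine (hmin ⟨hsplit.mono hCY Set.sdiff_subset hne, fun F hF hbF => ?_⟩ Set.sdiff_subset hxL).2 hx
  by_cases hFDE : (F ∩ (D ∪ E)).Nonempty
  · have hFsub := hsub F hF.subset hF.connectedOn hFDE
    exact hsep D hD (hEb'.subset_left_of_subset_union (hbF.trans hFsub))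
  · have hFs := hF.subset
    have hFE : Disjoint F E := Set.disjoint_left.2 fun x hxF hxE => hFDE ⟨x, hxF, .inr hxE⟩
    exact hsep F ⟨hF.connectedOn, by grind,
      fun u hu v hv huv => hF.mem_of_adj u hu v (by grind) huv⟩ hbF

theorem Decomposable.exists_isSplitter (hC : Decomposable H n C (boundary H Y C))
    (hconn : ConnectedOn H C) : ∃ L, IsSplitter H n Y C L := by
  have hbC : Disjoint C (boundary H Y C) := Set.disjoint_left.2 fun x hx hxb => hxb.2.1 hx
  obtain ⟨v, hv, hcard, hdec⟩ := hC.exists_root (Y := Y) hbC hconn subset_rfl subset_rfl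
  exact ⟨{v}, Set.singleton_subset_iff.2 hv, ⟨v, rfl⟩, by rwa [Set.union_singleton], hdec⟩

theorem Decomposable.exists_isSplitter_connectedOn_sdiff
    (hC : Decomposable H n C (boundary H Y C)) (hCY : C ⊆ Y) (hconn : ConnectedOn H C)
    (hYC : ConnectedOn H (Y \ C)) (hne : (boundary H Y C).Nonempty) :
    ∃ L, IsSplitter H n Y C L ∧ ∀ D, IsComponent H (C \ L) D → ConnectedOn H (Y \ D) := by
  have hne' : (boundary H C (Y \ C)).Nonempty := by
    obtain ⟨s, hsY, hsC, x, hx, hxs⟩ := hne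
    exact ⟨x, hx, fun h => h.2 hx, s, ⟨hsY, hsC⟩, hxs.symm⟩
  obtain ⟨L₀, hL₀⟩ := hC.exists_isSplitter hconn
  obtain ⟨L, hL⟩ := exists_minimal_of_wellFoundedLT _ (hL₀.exists_separating_contact hCY hne')
  refine ⟨L, hL.prop.1, fun D hD => ?_⟩
  have hYD : Y \ D = Y \ C ∪ C \ D := by grind [hD.subset]
  rw [hYD]
  refine hYC.union_of_components fun E hE => ?_
  obtain ⟨x, hxE, -, -, s, hs, hsx⟩ := inter_boundary_nonempty_of_minimal hL hCY hconn hD hE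
  exact ⟨s, hs, x, hxE, hsx⟩

end Splitter

/-! ### Arcs of a cycle -/

section Arc

/-- On a cycle whose positions are `0, …, N`, where `0` and `N` are the same point, the position
`x` represents a point of the arc from `i` to `j`. -/
def InArc (N i j x : ℕ) : Prop :=
  (i ≤ x ∧ x ≤ j) ∨ (x = 0 ∧ j = N) ∨ (x = N ∧ i = 0)

/-- If exactly one end of the arc from `i` to `j` is the cut point `0 = N` of the cycle, then `Q`
holds at a position that is outside the arc or is its other end. -/
def Escapes (N i j : ℕ) (Q : ℕ → Prop) : Prop :=
  (i = 0 → j = N ∨ ∃ y, j ≤ y ∧ y < N ∧ Q y) ∧ (j = N → i = 0 ∨ ∃ y, 0 < y ∧ y ≤ i ∧ Q y)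

theorem Escapes.mono {N i j : ℕ} {Q Q' : ℕ → Prop} (h : Escapes N i j Q) (hQ : ∀ x, Q x → Q' x) :
    Escapes N i j Q' :=
  ⟨fun hi => (h.1 hi).imp_right fun ⟨y, h₁, h₂, hy⟩ => ⟨y, h₁, h₂, hQ y hy⟩,
    fun hj => (h.2 hj).imp_right fun ⟨y, h₁, h₂, hy⟩ => ⟨y, h₁, h₂, hQ y hy⟩⟩

/-- There are no four distinct points in cyclic order that alternate between `P` and `Q`. -/
def NonAlternating (N : ℕ) (P Q : ℕ → Prop) : Prop :=
  ∀ a b c d, a < b → b < c → c < d → d ≤ N → ¬ (a = 0 ∧ d = N) → P a → Q b → P c → Q d → False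

/-- The predicates `P` and `Q` on a cycle of length `N` cover all points and do not alternate. -/
structure ArcCover (N : ℕ) (P Q : ℕ → Prop) : Prop where
  four_le : 4 ≤ N
  left_wrap : P 0 ↔ P N
  right_wrap : Q 0 ↔ Q N
  left_or_right : ∀ x ≤ N, P x ∨ Q x
  nonAlternating : NonAlternating N P Q
  nonAlternating_symm : NonAlternating N Q P

/-- The arc from `u` to `t` contains all points of `P`, has its ends in `P`, and has no interior
point in `Q`. -/
structure IsHull (N : ℕ) (P Q : ℕ → Prop) (u t : ℕ) : Prop where
  inArc : ∀ x ≤ N, P x → InArc N u t x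
  not_right : ∀ x, u < x → x < t → ¬ Q x
  left_start : P u
  left_end : P t
  escapes : Escapes N u t Q

theorem exists_least_greatest {i j : ℕ} {P : ℕ → Prop} (h : ∃ x, i ≤ x ∧ x ≤ j ∧ P x) :
    ∃ s t, i ≤ s ∧ t ≤ j ∧ P s ∧ P t ∧ ∀ x, i ≤ x → x ≤ j → P x → s ≤ x ∧ x ≤ t := by
  let F := {x ∈ Set.Icc i j | P x}
  have hF : F.Finite := (Set.finite_Icc i j).subset (Set.sep_subset _ _)
  have hne : F.Nonempty := by obtain ⟨x, hi, hj, hx⟩ := h; exact ⟨x, ⟨hi, hj⟩, hx⟩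
  obtain ⟨s, hs⟩ := hF.exists_minimal hne
  obtain ⟨t, ht⟩ := hF.exists_maximal hne
  refine ⟨s, t, hs.prop.1.1, ht.prop.1.2, hs.prop.2, ht.prop.2, fun x hi hj hx => ?_⟩
  exact ⟨not_lt.1 fun h => (hs.le_of_le ⟨⟨hi, hj⟩, hx⟩ h.le).not_gt h,
    not_lt.1 fun h => (ht.le_of_ge ⟨⟨hi, hj⟩, hx⟩ h.le).not_gt h⟩

namespace ArcCover

variable {N : ℕ} {P Q : ℕ → Prop}

theorem symm (h : ArcCover N P Q) : ArcCover N Q P :=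
  ⟨h.four_le, h.right_wrap, h.left_wrap, fun x hx => (h.left_or_right x hx).symm,
    h.nonAlternating_symm, h.nonAlternating⟩

theorem not_left_of_three_common (h : ArcCover N P Q) {b c w : ℕ} (hb : 0 < b) (hbc : b < c)
    (hc : c < N) (hPN : P N) (hQN : Q N) (hPb : P b) (hQb : Q b) (hPc : P c) (hQc : Q c)
    (hw₀ : 0 < w) (hwN : w < N) (hwb : w ≠ b) (hwc : w ≠ c) : ¬ P w := by
  intro hPw
  obtain hlt | hlt := hwb.lt_or_gt
  · exact h.nonAlternating w b c N hlt hbc hc le_rfl (by omega) hPw hQb hPc hQN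
  obtain hlt' | hlt' := hwc.lt_or_gt
  · exact h.nonAlternating_symm b w c N hlt hlt' hc le_rfl (by omega) hQb hPw hQc hPN
  · exact h.nonAlternating b c w N hbc hlt' hwN le_rfl (by omega) hPb hQc hPw hQN

theorem not_three_common (h : ArcCover N P Q) {b c : ℕ} (hb : 0 < b) (hbc : b < c) (hc : c < N)
    (hPN : P N) (hQN : Q N) (hPb : P b) (hQb : Q b) (hPc : P c) : ¬ Q c := by
  intro hQc
  obtain ⟨w, hw₀, hwN, hwb, hwc⟩ : ∃ w, 0 < w ∧ w < N ∧ w ≠ b ∧ w ≠ c := by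
    have := h.four_le
    by_cases h₁ : b = 1
    · by_cases h₂ : c = 2
      · exact ⟨3, by omega⟩
      · exact ⟨2, by omega⟩
    · exact ⟨1, by omega⟩
  exact (h.left_or_right w hwN.le).elim
    (h.not_left_of_three_common hb hbc hc hPN hQN hPb hQb hPc hQc hw₀ hwN hwb hwc)
    (h.symm.not_left_of_three_common hb hbc hc hQN hPN hQb hPb hQc hPc hw₀ hwN hwb hwc)

theorem right_outside (h : ArcCover N P Q) {s t : ℕ} (hP : P 0) (hQ : Q 0) (hs : 0 < s)
    (hPs : P s) (hPt : P t) (hst : ∀ x, s < x → x < t → ¬ Q x) :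
    (∀ x, 0 < x → x < N → Q x → t ≤ x) ∨ ∀ x, 0 < x → x < N → Q x → x ≤ s := by
  have hPN := h.left_wrap.1 hP
  have hQN := h.right_wrap.1 hQ
  by_contra! hcon
  obtain ⟨⟨r, hr₀, _, hQr, hrt⟩, r', hr'₀, hr'N, hQr', hsr'⟩ := hcon
  have hrs : r ≤ s := not_lt.1 fun hsr => hst r hsr hrt hQr
  have htr' : t ≤ r' := not_lt.1 fun hr't => hst r' hsr' hr't hQr'
  obtain hrs | rfl := hrs.lt_or_eq
  · exact h.nonAlternating_symm r s r' N hrs hsr' hr'N le_rfl (by omega) hQr hPs hQr' hPN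
  obtain htr' | rfl := htr'.lt_or_eq
  · exact h.nonAlternating 0 r t r' hr₀ hrt htr' hr'N.le (by omega) hP hQr hPt hQr'
  · exact h.not_three_common hr₀ hrt hr'N hPN hQN hPs hQr hPt hQr'

theorem exists_isHull_univ (h : ArcCover N P Q) (hQ : Q 0) (hne : ∃ x, 0 < x ∧ x < N ∧ P x) :
    ∃ u t, t ≤ N ∧ IsHull N P Q u t := by
  have hQN := h.right_wrap.1 hQ
  obtain ⟨s, t, hs, ht, hPs, hPt, hbd⟩ := exists_least_greatest (i := 1) (j := N - 1)
    (hne.imp fun x hx => ⟨hx.1, by omega, hx.2.2⟩)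
  have hnot : ∀ x, s < x → x < t → ¬ Q x := fun x hsx hxt hQx =>
    h.nonAlternating s x t N hsx hxt (by omega) le_rfl (by omega) hPs hQx hPt hQN
  by_cases hP : P 0
  swap
  · refine ⟨s, t, by omega, fun x hx hPx => .inl (hbd x ?_ ?_ hPx), hnot, hPs, hPt, ?_⟩
    · exact Nat.one_le_iff_ne_zero.2 fun h₀ => hP (h₀ ▸ hPx)
    · have : x ≠ N := fun hN => hP (h.left_wrap.2 (hN ▸ hPx))
      omega
    · exact ⟨fun _ => by omega, fun _ => by omega⟩
  have hPN := h.left_wrap.1 hP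
  by_cases hno : ∀ x, 0 < x → x < N → ¬ Q x
  · exact ⟨0, N, le_rfl, fun x hx _ => .inl ⟨Nat.zero_le x, hx⟩, hno, hP, hPN,
      fun _ => .inl rfl, fun _ => .inl rfl⟩
  push Not at hno
  obtain ⟨q, hq₀, hqN, hQq⟩ := hno
  obtain hout | hout := h.right_outside hP hQ (by omega) hPs hPt hnot
  · refine ⟨0, t, by omega, fun x hx hPx => ?_, fun x hx₀ hxt hQx => ?_, hP, hPt,
      fun _ => .inr ⟨q, hout q hq₀ hqN hQq, hqN, hQq⟩, fun _ => .inl rfl⟩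
    · have := hbd x
      unfold InArc
      grind
    · exact absurd (hout x hx₀ (by omega) hQx) (by omega)
  · refine ⟨s, N, le_rfl, fun x hx hPx => ?_, fun x hxs hxN hQx => ?_, hPs, hPN,
      fun _ => .inl rfl, fun _ => .inr ⟨q, hq₀, hout q hq₀ hqN hQq, hQq⟩⟩
    · have := hbd x
      unfold InArc
      grind
    · exact absurd (hout x (by omega) hxN hQx) (by omega)

theorem not_right_of_zero (h : ArcCover N P Q) (hQ : Q 0) {j x t y : ℕ} (hj : j < N)
    (hesc : Escapes N 0 j Q) (htj : t ≤ j) (hx₀ : 0 < x) (hxj : x < j) (hPx : P x) (hP : P 0)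
    (hPt : P t) (hy₀ : 0 < y) (hyt : y < t) : ¬ Q y := by
  intro hQy
  have hPN := h.left_wrap.1 hP
  have hQN := h.right_wrap.1 hQ
  obtain rfl | ⟨z, hjz, hzN, hQz⟩ := hesc.1 rfl
  · exact hj.false
  obtain htz | rfl := (htj.trans hjz).lt_or_eq
  · exact h.nonAlternating 0 y t z hy₀ hyt htz hzN.le (by omega) hP hQy hPt hQz
  obtain rfl : t = j := le_antisymm htj hjz
  obtain hxy | rfl | hyx := lt_trichotomy x y
  · exact h.nonAlternating_symm 0 x y t hx₀ hxy hyt hj.le (by omega) hQ hPx hQy hPt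
  · exact h.not_three_common hx₀ hyt hzN hPN hQN hPx hQy hPt hQz
  · exact h.nonAlternating 0 y x t hy₀ hyx hxj hj.le (by omega) hP hQy hPx hQz

theorem not_right_of_last (h : ArcCover N P Q) (hQ : Q 0) {i x s y : ℕ} (hi : 0 < i)
    (hesc : Escapes N i N Q) (his : i ≤ s) (hix : i < x) (hxN : x < N) (hPx : P x) (hPN : P N)
    (hPs : P s) (hsy : s < y) (hyN : y < N) : ¬ Q y := by
  intro hQy
  have hQN := h.right_wrap.1 hQ
  obtain rfl | ⟨z, hz₀, hzi, hQz⟩ := hesc.2 rfl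
  · exact hi.false
  obtain hzs | rfl := (hzi.trans his).lt_or_eq
  · exact h.nonAlternating_symm z s y N hzs hsy hyN le_rfl (by omega) hQz hPs hQy hPN
  obtain rfl : z = i := le_antisymm hzi his
  obtain hxy | rfl | hyx := lt_trichotomy x y
  · exact h.nonAlternating_symm z x y N hix hxy hyN le_rfl (by omega) hQz hPx hQy hPN
  · exact h.not_three_common hz₀ hix hxN hPN hQN hPs hQz hPx hQy
  · exact h.nonAlternating z y x N hsy hyx hxN le_rfl (by omega) hPs hQy hPx hQN

theorem exists_isHull (h : ArcCover N P Q) (hQ : Q 0) {i j : ℕ} (hj : j ≤ N)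
    (harc : ∀ x ≤ N, P x → InArc N i j x) (hne : ∃ x, i < x ∧ x < j ∧ P x)
    (hesc : Escapes N i j Q) : ∃ u t, i ≤ u ∧ t ≤ j ∧ IsHull N P Q u t := by
  by_cases hfull : i = 0 ∧ j = N
  · obtain ⟨rfl, rfl⟩ := hfull
    obtain ⟨u, t, ht, hut⟩ := h.exists_isHull_univ hQ hne
    exact ⟨u, t, Nat.zero_le u, ht, hut⟩
  obtain ⟨x, hix, hxj, hPx⟩ := hne
  obtain ⟨s, t, his, htj, hPs, hPt, hbd⟩ := exists_least_greatest ⟨x, hix.le, hxj.le, hPx⟩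
  have hx := hbd x hix.le hxj.le hPx
  refine ⟨s, t, his, htj, fun y hy hPy => ?_, fun y hsy hyt => ?_, hPs, hPt, ?_, ?_⟩
  · obtain hyij | ⟨rfl, rfl⟩ | ⟨rfl, rfl⟩ := harc y hy hPy
    · exact .inl (hbd y hyij.1 hyij.2 hPy)
    · exact .inr (.inl ⟨rfl, htj.antisymm (hbd j (by omega) le_rfl (h.left_wrap.1 hPy)).2⟩)
    · exact .inr (.inr ⟨rfl, (hbd 0 le_rfl (by omega) (h.left_wrap.2 hPy)).1.antisymm his⟩)
  · obtain rfl | hs := s.eq_zero_or_pos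
    · obtain rfl : i = 0 := by omega
      exact h.not_right_of_zero hQ (by omega) hesc htj hix hxj hPx hPs hPt hsy hyt
    obtain rfl | ht := (htj.trans hj).eq_or_lt
    · obtain rfl : j = t := by omega
      exact h.not_right_of_last hQ (by omega) hesc his hix hxj hPx hPt hPs hsy hyt
    · exact fun hQy => h.nonAlternating_symm 0 s y t hs hsy hyt ht.le (by omega) hQ hPs hQy hPt
  · rintro rfl
    exact (hesc.1 (by omega)).imp (by omega) fun ⟨y, hjy, hy⟩ => ⟨y, htj.trans hjy, hy⟩
  · rintro rfl
    exact (hesc.2 (by omega)).imp (by omega) fun ⟨y, hy₀, hyi, hy⟩ => ⟨y, hy₀, hyi.trans his, hy⟩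

end ArcCover

end Arc

/-! ### Rings -/

section Interior

variable {V : Type*} {H : SimpleGraph V} {o : ℕ → V} {N n i j r : ℕ} {Y A C D L : Set V}

/-- The vertex `o k` of the sequence `o` has a neighbour in `D`. -/
def Attached (H : SimpleGraph V) (o : ℕ → V) (D : Set V) (k : ℕ) : Prop :=
  ∃ x ∈ D, H.Adj x (o k)

theorem Attached.mono {D' : Set V} {k : ℕ} (h : Attached H o D k) (hD : D ⊆ D') :
    Attached H o D' k :=
  h.imp fun _ hx => ⟨hD hx.1, hx.2⟩

/-- The vertices `o 0, …, o (N - 1)`, listed in cyclic order with `o N = o 0`, surround the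
connected set `Y`: each has a neighbour in `Y`, only consecutive ones are adjacent, and the
attachments of two disjoint connected parts of `Y` do not alternate. -/
structure Ring (H : SimpleGraph V) (o : ℕ → V) (N : ℕ) (Y : Set V) : Prop where
  four_le : 4 ≤ N
  wrap : o N = o 0
  injOn : Set.InjOn o (Set.Iio N)
  connectedOn : ConnectedOn H Y
  notMem : ∀ k ≤ N, o k ∉ Y
  attached : ∀ k ≤ N, Attached H o Y k
  eq_of_adj : ∀ a b, a < b → b < N → H.Adj (o a) (o b) → b = a + 1 ∨ a = 0 ∧ b = N - 1
  not_alternating : ∀ C D, ConnectedOn H C → ConnectedOn H D → Disjoint C D → C ⊆ Y → D ⊆ Y →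
    ∀ a b c d, a < b → b < c → c < d → d < N →
      Attached H o C a → Attached H o D b → Attached H o C c → Attached H o D d → False

namespace Ring

theorem attached_wrap (hr : Ring H o N Y) (D : Set V) : Attached H o D 0 ↔ Attached H o D N := by
  rw [Attached, Attached, hr.wrap]

theorem eq_of_lt (hr : Ring H o N Y) {a b : ℕ} (hab : a < b) (hb : b ≤ N) (h : o a = o b) :
    a = 0 ∧ b = N := by
  obtain hb | rfl := hb.lt_or_eq
  · exact absurd (hr.injOn (hab.trans hb) hb h) hab.ne
  · exact ⟨hr.injOn hab (Nat.zero_lt_of_lt hab) (h.trans hr.wrap), rfl⟩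

theorem ne_of_lt (hr : Ring H o N Y) {a b : ℕ} (hab : a < b) (hb : b ≤ N) (h : 0 < a ∨ b < N) :
    o a ≠ o b := fun hab' => by
  have := hr.eq_of_lt hab hb hab'
  omega

theorem eq_of_adj_le (hr : Ring H o N Y) {a b : ℕ} (hab : a < b) (hb : b ≤ N)
    (h : H.Adj (o a) (o b)) : b = a + 1 ∨ a = 0 ∧ b = N - 1 ∨ a = 1 ∧ b = N := by
  obtain hb | rfl := hb.lt_or_eq
  · exact (hr.eq_of_adj a b hab hb h).imp_right .inl
  · rw [hr.wrap] at h
    obtain rfl | ha := a.eq_zero_or_pos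
    · exact absurd h (H.loopless.irrefl _)
    · have := hr.eq_of_adj 0 a ha hab h.symm
      omega

theorem nonAlternating (hr : Ring H o N Y) (hC : ConnectedOn H C) (hD : ConnectedOn H D)
    (hCD : Disjoint C D) (hCY : C ⊆ Y) (hDY : D ⊆ Y) :
    NonAlternating N (Attached H o C) (Attached H o D) := by
  intro a b c d hab hbc hcd hd hne hCa hDb hCc hDd
  obtain hd | rfl := hd.lt_or_eq
  · exact hr.not_alternating C D hC hD hCD hCY hDY a b c d hab hbc hcd hd hCa hDb hCc hDd
  · exact hr.not_alternating D C hD hC hCD.symm hDY hCY 0 a b c (by omega) hab hbc hcd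
      ((hr.attached_wrap D).2 hDd) hCa hDb hCc

theorem arcCover (hr : Ring H o N Y) (hD : ConnectedOn H D) (hD' : ConnectedOn H (Y \ D))
    (hDY : D ⊆ Y) : ArcCover N (Attached H o D) (Attached H o (Y \ D)) where
  four_le := hr.four_le
  left_wrap := hr.attached_wrap D
  right_wrap := hr.attached_wrap _
  left_or_right k hk := by
    obtain ⟨y, hy, hyk⟩ := hr.attached k hk
    by_cases hyD : y ∈ D
    · exact .inl ⟨y, hyD, hyk⟩
    · exact .inr ⟨y, ⟨hy, hyD⟩, hyk⟩
  nonAlternating := hr.nonAlternating hD hD' Set.disjoint_sdiff_right hDY Set.sdiff_subset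
  nonAlternating_symm := hr.nonAlternating hD' hD Set.disjoint_sdiff_left Set.sdiff_subset hDY

end Ring

theorem IsComponent.mem_of_sUnion {F : Set (Set V)} (hF : ∀ D ∈ F, IsComponent H A D)
    (hC : IsComponent H (⋃₀ F) C) : C ∈ F := by
  obtain ⟨x, hx⟩ := hC.nonempty
  obtain ⟨D, hD, hxD⟩ := hC.subset hx
  have hFA : ⋃₀ F ⊆ A := Set.sUnion_subset fun D hD => (hF D hD).subset
  have hDC : D ⊆ C :=
    hC.subset_of_connectedOn (hF D hD).connectedOn (Set.subset_sUnion_of_mem hD) ⟨x, hxD, hx⟩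
  have hCD : C ⊆ D :=
    (hF D hD).subset_of_connectedOn hC.connectedOn (hC.subset.trans hFA) ⟨x, hx, hxD⟩
  exact hCD.antisymm hDC ▸ hD

theorem disjoint_sUnion_of_components {F F' : Set (Set V)} (hF : ∀ D ∈ F, IsComponent H A D)
    (hF' : ∀ D ∈ F', IsComponent H A D) (hFF' : Disjoint F F') : Disjoint (⋃₀ F) (⋃₀ F') := by
  rw [Set.disjoint_sUnion_left]
  intro D hD
  rw [Set.disjoint_sUnion_right]
  exact fun E hE => (hF D hD).disjoint (hF' E hE) (hFF'.ne_of_mem hD hE)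

theorem not_adj_sUnion_of_components {F F' : Set (Set V)} (hF : ∀ D ∈ F, IsComponent H A D)
    (hF' : ∀ D ∈ F', IsComponent H A D) (hFF' : Disjoint F F') :
    ∀ x ∈ ⋃₀ F, ∀ y ∈ ⋃₀ F', ¬ H.Adj x y := by
  rintro x ⟨D, hD, hx⟩ y ⟨E, hE, hy⟩
  exact (hF D hD).not_adj (hF' E hE) (hFF'.ne_of_mem hD hE) x hx y hy

theorem IsComponent.boundary_subset_union (hD : IsComponent H (C \ L) D) :
    boundary H Y D ⊆ boundary H Y C ∪ L :=
  hD.boundary_subset.trans (Set.union_subset_union_right _ Set.inter_subset_right)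

theorem boundary_self (H : SimpleGraph V) (Y : Set V) : boundary H Y Y = ∅ :=
  Set.eq_empty_of_forall_notMem fun _ hy => hy.2.1 hy.1

theorem ncard_pair_le (a b : V) : ({a, b} : Set V).ncard ≤ 2 :=
  (Set.ncard_insert_le a {b}).trans_eq (by rw [Set.ncard_singleton])

namespace IsSplitter

theorem union_subset_sdiff (hL : IsSplitter H n Y C L) (hCY : C ⊆ Y)
    (hD : IsComponent H (C \ L) D) : boundary H Y C ∪ L ⊆ Y \ D := by
  rintro y (hy | hy)
  · exact ⟨hy.1, fun hyD => hy.2.1 (hD.subset hyD).1⟩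
  · exact ⟨hCY (hL.subset hy), fun hyD => (hD.subset hyD).2 hy⟩

theorem decomposable_sUnion [Finite V] {F : Set (Set V)} {Q : Set V} {k : ℕ}
    (hL : IsSplitter H n Y C L) (hCY : C ⊆ Y) (hF : ∀ D ∈ F, IsComponent H (C \ L) D)
    (hQ : Q.ncard ≤ k) : Decomposable H (n + k) (⋃₀ F) (boundary H Y C ∪ L ∪ Q) := by
  refine .of_components fun D hD => ?_
  have hD := hF D (hD.mem_of_sUnion hF)
  refine .forget (Set.union_subset_union_left Q (hD.boundary_subset_union)) ?_
    ((hL.decomposable D hD).union_bag hQ)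
  exact fun x hx y hy hxy => hy.imp_left fun hy =>
    have hyD := hL.union_subset_sdiff hCY hD hy
    ⟨hyD.1, hyD.2, x, hx, hxy⟩

end IsSplitter

/-- Each member `D` of `F` is a component of `A` that is attached only to the arc from `u D` to
`t D` inside the arc from `i` to `j`, and that can be decomposed together with its arc. -/
structure BlockFamily (H : SimpleGraph V) (o : ℕ → V) (N : ℕ) (Y : Set V) (n : ℕ) (A : Set V)
    (u t : Set V → ℕ) (i j : ℕ) (F : Set (Set V)) : Prop where
  isComponent : ∀ D ∈ F, IsComponent H A D
  start_le : ∀ D ∈ F, i ≤ u D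
  end_le : ∀ D ∈ F, t D ≤ j
  isHull : ∀ D ∈ F, IsHull N (Attached H o D) (Attached H o (Y \ D)) (u D) (t D)
  decomposable : ∀ D ∈ F, Decomposable H (n + 3) (D ∪ o '' Set.Ioo (u D) (t D))
    (boundary H Y D ∪ {o (u D), o (t D)})

namespace BlockFamily

variable {u t : Set V → ℕ} {F : Set (Set V)}

theorem left (h : BlockFamily H o N Y n A u t i j F) (r : ℕ) :
    BlockFamily H o N Y n A u t i r {D ∈ F | t D ≤ r} :=
  ⟨fun D hD => h.isComponent D hD.1, fun D hD => h.start_le D hD.1, fun _ hD => hD.2,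
    fun D hD => h.isHull D hD.1, fun D hD => h.decomposable D hD.1⟩

theorem right (h : BlockFamily H o N Y n A u t i j F) (hr : ∀ D ∈ F, t D ≤ r ∨ r ≤ u D) :
    BlockFamily H o N Y n A u t r j {D ∈ F | ¬ t D ≤ r} :=
  ⟨fun D hD => h.isComponent D hD.1, fun D hD => (hr D hD.1).resolve_left hD.2,
    fun D hD => h.end_le D hD.1, fun D hD => h.isHull D hD.1, fun D hD => h.decomposable D hD.1⟩

theorem mem_image_Icc_of_adj (h : BlockFamily H o N Y n A u t i j F) (hr : Ring H o N Y)
    (hij : i ≤ j) (hj : j ≤ N) {x : V} (hx : x ∈ ⋃₀ F ∪ o '' Set.Ioo i j) {b : ℕ} (hb : b ≤ N)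
    (hxb : H.Adj x (o b)) : o b ∈ o '' Set.Icc i j := by
  suffices harc : InArc N i j b by
    obtain hb | ⟨rfl, rfl⟩ | ⟨rfl, rfl⟩ := harc
    · exact ⟨b, hb, rfl⟩
    · exact ⟨j, ⟨hij, le_rfl⟩, hr.wrap⟩
    · exact ⟨0, ⟨le_rfl, hij⟩, hr.wrap.symm⟩
  unfold InArc
  obtain ⟨D, hD, hx⟩ | ⟨k, ⟨hik, hkj⟩, rfl⟩ := hx
  · have hiu := h.start_le D hD
    have htj := h.end_le D hD
    have hut := (h.isHull D hD).inArc b hb ⟨x, hx, hxb⟩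
    unfold InArc at hut
    omega
  · obtain hkb | rfl | hbk := lt_trichotomy k b
    · have := hr.eq_of_adj_le hkb hb hxb
      omega
    · exact absurd hxb (H.loopless.irrefl _)
    · have := hr.eq_of_adj_le hbk (hkj.le.trans hj) hxb.symm
      omega

theorem decomposable_of_full [Finite V] (h : BlockFamily H o N Y n (C \ L) u t i j F)
    (hr : Ring H o N Y) (hCY : C ⊆ Y) (hL : IsSplitter H n Y C L) (hj : j ≤ N) (hDF : D ∈ F)
    (hu : u D = i) (ht : t D = j) :
    Decomposable H (n + 3) (⋃₀ F ∪ o '' Set.Ioo i j) (boundary H Y C ∪ L ∪ {o i, o j}) := by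
  subst hu ht
  have hD := h.isComponent D hDF
  have hF : ∀ E ∈ F \ {D}, IsComponent H (C \ L) E := fun E hE => h.isComponent E hE.1
  have hnot : ∀ k ∈ Set.Ioo (u D) (t D), ∀ y ∈ Y \ D, ¬ H.Adj y (o k) := fun k hk y hy hyk =>
    (h.isHull D hDF).not_right k hk.1 hk.2 ⟨y, hy, hyk⟩
  have hrest : ⋃₀ (F \ {D}) ⊆ Y \ D := by
    rintro x ⟨E, hE, hx⟩
    exact ⟨hCY ((hF E hE).subset hx).1, fun hxD => hE.2 ((hF E hE).eq_of_mem hD hx hxD)⟩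
  have hmain : Decomposable H (n + 3) (D ∪ o '' Set.Ioo (u D) (t D))
      (boundary H Y C ∪ L ∪ {o (u D), o (t D)}) := by
    refine .forget (Set.union_subset_union_left _ hD.boundary_subset_union) ?_
      (h.decomposable D hDF)
    refine fun x hx y hy hxy => hy.imp_left fun hy => ?_
    have hyD := hL.union_subset_sdiff hCY hD hy
    obtain hx | ⟨k, hk, rfl⟩ := hx
    · exact ⟨hyD.1, hyD.2, x, hx, hxy⟩
    · exact absurd hxy.symm (hnot k hk y hyD)
  have hpair : ({o (u D), o (t D)} : Set V).ncard ≤ 3 := (ncard_pair_le _ _).trans (by norm_num)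
  rw [← Set.insert_sdiff_self_of_mem hDF, Set.sUnion_insert, Set.union_comm D, Set.union_assoc]
  refine .union ?_ ?_ (hL.decomposable_sUnion hCY hF hpair) hmain
  · refine Set.disjoint_left.2 fun x hx hx' => hx'.elim (hrest hx).2 ?_
    rintro ⟨k, hk, rfl⟩
    exact hr.notMem k (hk.2.le.trans hj) (hrest hx).1
  · rintro x hx y (hy | ⟨k, hk, rfl⟩) hxy
    · obtain ⟨E, hE, hx⟩ := hx
      exact (hF E hE).not_adj hD hE.2 x hx y hy hxy
    · exact hnot k hk x (hrest hx) hxy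

theorem exists_split (h : BlockFamily H o N Y n A u t i j F) (hAY : A ⊆ Y) (hij : i + 1 < j)
    (hfull : ∀ D ∈ F, u D = i → t D ≠ j) :
    ∃ r, i < r ∧ r < j ∧ ∀ D ∈ F, t D ≤ r ∨ r ≤ u D := by
  by_cases hsucc : ∀ D ∈ F, t D ≤ i + 1 ∨ i + 1 ≤ u D
  · exact ⟨i + 1, by omega, hij, hsucc⟩
  push Not at hsucc
  obtain ⟨D, hDF, hit, hui⟩ := hsucc
  have hu : u D = i := by have := h.start_le D hDF; omega
  refine ⟨t D, by omega, (h.end_le D hDF).lt_of_ne (hfull D hDF hu), fun E hEF => ?_⟩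
  by_contra! hcon
  obtain ⟨x, hx, hxt⟩ := (h.isHull D hDF).left_end
  refine (h.isHull E hEF).not_right (t D) hcon.2 hcon.1
    ⟨x, ⟨hAY ((h.isComponent D hDF).subset hx), fun hxE => ?_⟩, hxt⟩
  obtain rfl := (h.isComponent D hDF).eq_of_mem (h.isComponent E hEF) hx hxE
  exact hcon.1.false

theorem notMem_sUnion (h : BlockFamily H o N Y n A u t i j F) (hr : Ring H o N Y) (hAY : A ⊆ Y)
    {k : ℕ} (hk : k ≤ N) : o k ∉ ⋃₀ F := by
  rintro ⟨D, hD, hkD⟩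
  exact hr.notMem k hk (hAY ((h.isComponent D hD).subset hkD))

variable {F₁ F₂ : Set (Set V)}

theorem disjoint_of_split (h₁ : BlockFamily H o N Y n A u t i r F₁)
    (h₂ : BlockFamily H o N Y n A u t r j F₂) (hF : Disjoint F₁ F₂) (hr : Ring H o N Y)
    (hAY : A ⊆ Y) (hj : j ≤ N) (hrj : r ≤ j) :
    Disjoint (⋃₀ F₁ ∪ o '' Set.Ioo i r) (⋃₀ F₂ ∪ o '' Set.Ioo r j) := by
  refine Set.disjoint_left.2 ?_
  rintro _ (hx | ⟨k, ⟨hik, hkr⟩, rfl⟩) (hx' | ⟨l, ⟨hrl, hlj⟩, hlk⟩)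
  · exact Set.disjoint_left.1
      (disjoint_sUnion_of_components h₁.isComponent h₂.isComponent hF) hx hx'
  · exact h₁.notMem_sUnion hr hAY (hlj.le.trans hj) (hlk ▸ hx)
  · exact h₂.notMem_sUnion hr hAY (by omega) hx'
  · exact hr.ne_of_lt (hkr.trans hrl) (hlj.le.trans hj) (by omega) hlk.symm

theorem not_adj_of_split (h₁ : BlockFamily H o N Y n A u t i r F₁)
    (h₂ : BlockFamily H o N Y n A u t r j F₂) (hF : Disjoint F₁ F₂) (hr : Ring H o N Y)
    (hj : j ≤ N) (hir : i ≤ r) (hrj : r ≤ j) :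
    ∀ x ∈ ⋃₀ F₁ ∪ o '' Set.Ioo i r, ∀ y ∈ ⋃₀ F₂ ∪ o '' Set.Ioo r j, ¬ H.Adj x y := by
  rintro x hx y (hy | ⟨l, ⟨hrl, hlj⟩, rfl⟩) hxy
  · obtain hx | ⟨k, ⟨hik, hkr⟩, rfl⟩ := hx
    · exact not_adj_sUnion_of_components h₁.isComponent h₂.isComponent hF x hx y hy hxy
    · obtain ⟨a, ⟨hra, haj⟩, hak⟩ :=
        h₂.mem_image_Icc_of_adj hr hrj hj (.inl hy) (by omega) hxy.symm
      exact hr.ne_of_lt (hkr.trans_le hra) (haj.trans hj) (by omega) hak.symm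
  · obtain ⟨a, ⟨_, har⟩, hal⟩ :=
      h₁.mem_image_Icc_of_adj hr hir (hrj.trans hj) hx (hlj.le.trans hj) hxy
    exact hr.ne_of_lt (har.trans_lt hrl) (hlj.le.trans hj) (by omega) hal

theorem decomposable_of_split (h₁ : BlockFamily H o N Y n A u t i r F₁)
    (h₂ : BlockFamily H o N Y n A u t r j F₂) (hF : Disjoint F₁ F₂) (hr : Ring H o N Y)
    (hAY : A ⊆ Y) (hj : j ≤ N) (hir : i < r) (hrj : r < j) {K : Set V} (hK : K.ncard ≤ n)
    (hX₁ : Decomposable H (n + 3) (⋃₀ F₁ ∪ o '' Set.Ioo i r) (K ∪ {o i, o r}))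
    (hX₂ : Decomposable H (n + 3) (⋃₀ F₂ ∪ o '' Set.Ioo r j) (K ∪ {o r, o j})) :
    Decomposable H (n + 3) (⋃₀ (F₁ ∪ F₂) ∪ o '' Set.Ioo i j) (K ∪ {o i, o j}) := by
  have hX₁' : Decomposable H (n + 3) (⋃₀ F₁ ∪ o '' Set.Ioo i r)
      (insert (o r) (K ∪ {o i, o j})) := by
    refine .forget (by grind) (fun x hx y hy hxy => ?_) hX₁
    suffices y = o j → o j = o i by grind
    rintro rfl
    obtain ⟨a, ha, haj⟩ := h₁.mem_image_Icc_of_adj hr hir.le (by omega) hx hj hxy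
    grind [hr.eq_of_lt (ha.2.trans_lt hrj) hj haj]
  have hX₂' : Decomposable H (n + 3) (⋃₀ F₂ ∪ o '' Set.Ioo r j)
      (insert (o r) (K ∪ {o i, o j})) := by
    refine .forget (by grind) (fun x hx y hy hxy => ?_) hX₂
    suffices y = o i → o i = o j by grind
    rintro rfl
    obtain ⟨a, ha, hai⟩ := h₂.mem_image_Icc_of_adj hr hrj.le hj hx (by omega) hxy
    grind [hr.eq_of_lt (hir.trans_le ha.1) (ha.2.trans hj) hai.symm]
  have hIoo : Set.Ioo i j = insert r (Set.Ioo i r ∪ Set.Ioo r j) := by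
    ext k
    simp only [Set.mem_Ioo, Set.mem_insert_iff, Set.mem_union]
    omega
  convert Decomposable.introduce (v := o r) ?_ ?_
    (.union (h₁.disjoint_of_split h₂ hF hr hAY hj hrj.le)
      (h₁.not_adj_of_split h₂ hF hr hj hir.le hrj.le) hX₁' hX₂') using 1
  · rw [hIoo, Set.image_insert_eq, Set.image_union, Set.sUnion_union, Set.union_insert,
      Set.union_union_union_comm]
  · rintro ((hx | ⟨k, ⟨_, hkr⟩, hk⟩) | (hx | ⟨k, ⟨hrk, hkj⟩, hk⟩))
    · exact h₁.notMem_sUnion hr hAY (by omega) hx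
    · exact hr.ne_of_lt hkr (by omega) (by omega) hk
    · exact h₂.notMem_sUnion hr hAY (by omega) hx
    · exact hr.ne_of_lt hrk (by omega) (by omega) hk.symm
  · calc (insert (o r) (K ∪ {o i, o j})).ncard ≤ (K ∪ {o i, o j}).ncard + 1 :=
          Set.ncard_insert_le _ _
      _ ≤ K.ncard + ({o i, o j} : Set V).ncard + 1 := by gcongr; exact Set.ncard_union_le _ _
      _ ≤ n + 2 + 1 := by gcongr; exact ncard_pair_le _ _

theorem decomposable_interval [Finite V] (h : BlockFamily H o N Y n (C \ L) u t i j F)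
    (hr : Ring H o N Y) (hCY : C ⊆ Y) (hL : IsSplitter H n Y C L) (hj : j ≤ N) :
    Decomposable H (n + 3) (⋃₀ F ∪ o '' Set.Ioo i j) (boundary H Y C ∪ L ∪ {o i, o j}) := by
  induction hm : j - i using Nat.strong_induction_on generalizing i j F with
  | _ m ih =>
  obtain hij | hij := le_or_gt j (i + 1)
  · have hIoo : Set.Ioo i j = ∅ := by
      ext k
      simp only [Set.mem_Ioo, Set.mem_empty_iff_false, iff_false]
      omega
    rw [hIoo, Set.image_empty, Set.union_empty]
    exact hL.decomposable_sUnion hCY h.isComponent ((ncard_pair_le _ _).trans (by norm_num))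
  by_cases hfull : ∃ D ∈ F, u D = i ∧ t D = j
  · obtain ⟨D, hD, hu, ht⟩ := hfull
    exact h.decomposable_of_full hr hCY hL hj hD hu ht
  push Not at hfull
  obtain ⟨r, hir, hrj, hsplit⟩ := h.exists_split (Set.sdiff_subset.trans hCY) hij hfull
  have hleft := h.left r
  have hright := h.right hsplit
  have hdisj : Disjoint {D ∈ F | t D ≤ r} {D ∈ F | ¬ t D ≤ r} :=
    Set.disjoint_left.2 fun D hD hD' => hD'.2 hD.2
  have hF : F = {D ∈ F | t D ≤ r} ∪ {D ∈ F | ¬ t D ≤ r} := by ext D; grind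
  rw [hF]
  exact hleft.decomposable_of_split hright hdisj hr (Set.sdiff_subset.trans hCY) hj hir hrj
    hL.card_le (ih (r - i) (by omega) hleft (by omega) rfl) (ih (j - r) (by omega) hright hj rfl)

end BlockFamily

namespace Ring

theorem exists_blockFamily (hr : Ring H o N Y) (hCY : C ⊆ Y) (hj : j ≤ N)
    (harc : ∀ x ≤ N, Attached H o C x → InArc N i j x)
    (hesc : Escapes N i j (Attached H o (Y \ C)))
    (hconn : ∀ D, IsComponent H (C \ L) D → ConnectedOn H (Y \ D))
    (hzero : ∀ D, IsComponent H (C \ L) D → Attached H o (Y \ D) 0)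
    (hblock : ∀ D u t, IsComponent H (C \ L) D → t ≤ N →
      IsHull N (Attached H o D) (Attached H o (Y \ D)) u t →
        Decomposable H (n + 3) (D ∪ o '' Set.Ioo u t) (boundary H Y D ∪ {o u, o t})) :
    ∃ u t, BlockFamily H o N Y n (C \ L) u t i j
      {D | IsComponent H (C \ L) D ∧ ∃ x, i < x ∧ x < j ∧ Attached H o D x} := by
  have hhull : ∀ D, ∃ u t, IsComponent H (C \ L) D ∧ (∃ x, i < x ∧ x < j ∧ Attached H o D x) →
      i ≤ u ∧ t ≤ j ∧ IsHull N (Attached H o D) (Attached H o (Y \ D)) u t := by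
    intro D
    by_cases hD : IsComponent H (C \ L) D ∧ ∃ x, i < x ∧ x < j ∧ Attached H o D x
    swap
    · exact ⟨0, 0, fun h => absurd h hD⟩
    obtain ⟨hD, hx⟩ := hD
    have hDC : D ⊆ C := hD.subset.trans Set.sdiff_subset
    obtain ⟨u, t, hut⟩ := (hr.arcCover hD.connectedOn (hconn D hD) (hDC.trans hCY)).exists_isHull
      (hzero D hD) hj (fun x hxN hDx => harc x hxN (hDx.mono hDC)) hx
      (hesc.mono fun x hx => hx.mono (Set.sdiff_subset_sdiff_right hDC))
    exact ⟨u, t, fun _ => hut⟩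
  choose u t hut using hhull
  exact ⟨u, t, fun D hD => hD.1, fun D hD => (hut D hD).1, fun D hD => (hut D hD).2.1,
    fun D hD => (hut D hD).2.2, fun D hD =>
      hblock D (u D) (t D) hD.1 ((hut D hD).2.1.trans hj) (hut D hD).2.2⟩

theorem decomposable_sdiff_union_arc [Finite V] (hr : Ring H o N Y) (hCY : C ⊆ Y)
    (hL : IsSplitter H n Y C L) (hj : j ≤ N)
    (harc : ∀ x ≤ N, Attached H o C x → InArc N i j x)
    (hesc : Escapes N i j (Attached H o (Y \ C)))
    (hconn : ∀ D, IsComponent H (C \ L) D → ConnectedOn H (Y \ D))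
    (hzero : ∀ D, IsComponent H (C \ L) D → Attached H o (Y \ D) 0)
    (hblock : ∀ D u t, IsComponent H (C \ L) D → t ≤ N →
      IsHull N (Attached H o D) (Attached H o (Y \ D)) u t →
        Decomposable H (n + 3) (D ∪ o '' Set.Ioo u t) (boundary H Y D ∪ {o u, o t})) :
    Decomposable H (n + 3) (C \ L ∪ o '' Set.Ioo i j) (boundary H Y C ∪ L ∪ {o i, o j}) := by
  obtain ⟨u, t, hF⟩ := hr.exists_blockFamily hCY hj harc hesc hconn hzero hblock
  set F := {D | IsComponent H (C \ L) D ∧ ∃ x, i < x ∧ x < j ∧ Attached H o D x}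
  let G := {D | IsComponent H (C \ L) D ∧ ¬ ∃ x, i < x ∧ x < j ∧ Attached H o D x}
  have hG : ∀ D ∈ G, IsComponent H (C \ L) D := fun D hD => hD.1
  have hGF : Disjoint G F := Set.disjoint_left.2 fun D hD hD' => hD.2 hD'.2
  have hGrest : Decomposable H (n + 3) (⋃₀ G) (boundary H Y C ∪ L ∪ {o i, o j}) :=
    hL.decomposable_sUnion hCY hG ((ncard_pair_le _ _).trans (by norm_num))
  have hcover : C \ L = ⋃₀ G ∪ ⋃₀ F := by
    refine Set.Subset.antisymm (fun x hx => ?_) (Set.union_subset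
      (Set.sUnion_subset fun D hD => hD.1.subset) (Set.sUnion_subset fun D hD => hD.1.subset))
    obtain ⟨D, hD, hxD⟩ := exists_isComponent_mem (H := H) hx
    by_cases hDF : D ∈ F
    · exact .inr ⟨D, hDF, hxD⟩
    · exact .inl ⟨D, ⟨hD, fun h => hDF ⟨hD, h⟩⟩, hxD⟩
  rw [hcover, Set.union_assoc]
  refine .union ?_ ?_ hGrest (hF.decomposable_interval hr hCY hL hj)
  · refine Set.disjoint_left.2 ?_
    rintro x hx (hx' | ⟨k, hk, rfl⟩)
    · exact Set.disjoint_left.1 (disjoint_sUnion_of_components hG hF.isComponent hGF) hx hx'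
    · obtain ⟨D, hD, hkD⟩ := hx
      exact hr.notMem k (hk.2.le.trans hj) (hCY (hD.1.subset hkD).1)
  · rintro x hx y (hy | ⟨k, hk, rfl⟩) hxy
    · exact not_adj_sUnion_of_components hG hF.isComponent hGF x hx y hy hxy
    · obtain ⟨D, hD, hx⟩ := hx
      exact hD.2 ⟨k, hk.1, hk.2, x, hx, hxy⟩

theorem decomposable_union_arc [Finite V] (hr : Ring H o N Y) (hCY : C ⊆ Y)
    (hC : ConnectedOn H C) (hC' : ConnectedOn H (Y \ C)) (hzero : Attached H o (Y \ C) 0)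
    (hdec : Decomposable H n C (boundary H Y C)) (hj : j ≤ N)
    (hull : IsHull N (Attached H o C) (Attached H o (Y \ C)) i j) :
    Decomposable H (n + 3) (C ∪ o '' Set.Ioo i j) (boundary H Y C ∪ {o i, o j}) := by
  induction hm : C.ncard using Nat.strong_induction_on generalizing C i j with
  | _ m ih =>
  obtain ⟨x, hx, y, hy, hxy⟩ := hr.connectedOn.exists_adj_of_ssubset hC.nonempty
    (hCY.ssubset_of_ne fun h => by simpa [h] using hC'.nonempty)
  obtain ⟨L, hL, hLconn⟩ :=
    hdec.exists_isSplitter_connectedOn_sdiff hCY hC hC' ⟨y, hy.1, hy.2, x, hx, hxy⟩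
  have hDC : ∀ D, IsComponent H (C \ L) D → D ⊂ C := fun D hD => by
    obtain ⟨l, hl⟩ := hL.nonempty
    exact ⟨hD.subset.trans Set.sdiff_subset, fun h => (hD.subset (h (hL.subset hl))).2 hl⟩
  have hzeroD : ∀ D, IsComponent H (C \ L) D → Attached H o (Y \ D) 0 := fun D hD =>
    hzero.mono (Set.sdiff_subset_sdiff_right (hDC D hD).subset)
  have hstep := hr.decomposable_sdiff_union_arc hCY hL hj hull.inArc hull.escapes hLconn hzeroD
    fun D u t hD ht hut => ih _ (hm ▸ Set.ncard_lt_ncard (hDC D hD)) ((hDC D hD).subset.trans hCY)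
      hD.connectedOn (hLconn D hD) (hzeroD D hD) (hL.decomposable D hD) ht hut rfl
  rw [Set.union_right_comm] at hstep
  convert hstep.introduce_set ?_ ?_ using 1
  · rw [Set.union_right_comm, Set.sdiff_union_of_subset hL.subset]
  · refine Set.disjoint_left.2 ?_
    rintro _ (hx | ⟨k, hk, rfl⟩) hxL
    · exact hx.2 hxL
    · exact hr.notMem k (hk.2.le.trans hj) (hCY (hL.subset hxL))
  · rw [Set.union_right_comm]
    calc (boundary H Y C ∪ L ∪ {o i, o j}).ncard ≤ _ := Set.ncard_union_le _ _
      _ ≤ n + 3 := add_le_add hL.card_le ((ncard_pair_le _ _).trans (by norm_num))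

theorem isSplitter_singleton [Finite V] (hr : Ring H o N Y) (hY : Decomposable H n Y ∅) {z : V}
    (hz : z ∈ Y) : IsSplitter H n Y Y {z} := by
  have hn : 1 ≤ n := by
    obtain ⟨v, -, hv, -⟩ := hY.exists_root (Y := Y) (Set.disjoint_empty _) hr.connectedOn subset_rfl
      (boundary_self H Y).subset
    rwa [boundary_self, insert_empty_eq, Set.ncard_singleton] at hv
  refine ⟨Set.singleton_subset_iff.2 hz, Set.singleton_nonempty z, ?_, fun D hD => ?_⟩
  · rwa [boundary_self, Set.empty_union, Set.ncard_singleton]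
  have hDz : boundary H Y D ⊆ {z} := by
    simpa only [boundary_self, Set.empty_union] using hD.boundary_subset_union (Y := Y)
  convert (hY.diff_clique (H.isClique_singleton z) (Set.singleton_subset_iff.2 hz)).inter
    (D ∪ boundary H Y D) using 1
  · ext x
    grind [hD.subset]
  · grind [hD.subset]

theorem connectedOn_sdiff (hr : Ring H o N Y) {z : V} (hz : z ∈ Y)
    (hD : IsComponent H (Y \ {z}) D) : ConnectedOn H (Y \ D) := by
  have hadj : ∀ E, IsComponent H (Y \ {z}) E → ∃ x ∈ E, H.Adj z x := by
    intro E hE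
    obtain ⟨x, hx, y, hy, hxy⟩ := hr.connectedOn.exists_adj_of_ssubset hE.nonempty
      ⟨hE.subset.trans Set.sdiff_subset, fun h => (hE.subset (h hz)).2 rfl⟩
    obtain rfl : y = z := by_contra fun hyz => hy.2 (hE.mem_of_adj x hx y ⟨hy.1, hyz⟩ hxy)
    exact ⟨x, hx, hxy.symm⟩
  have hYD : Y \ D = {z} ∪ (Y \ {z}) \ D := by ext x; grind [hD.subset]
  rw [hYD]
  refine (ConnectedOn.singleton z).union_of_components fun E hE => ?_
  obtain ⟨x, hx, hzx⟩ := hadj E (hD.of_diff hE)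
  exact ⟨z, rfl, x, hx, hzx⟩

theorem decomposable [Finite V] (hr : Ring H o N Y) (hY : Decomposable H n Y ∅) :
    Decomposable H (n + 3) (Y ∪ o '' Set.Iio N) ∅ := by
  obtain ⟨z, hz, hzo⟩ := hr.attached 0 (Nat.zero_le N)
  have hL := hr.isSplitter_singleton hY hz
  have hzero : ∀ D, IsComponent H (Y \ {z}) D → Attached H o (Y \ D) 0 := fun D hD =>
    ⟨z, ⟨hz, fun hzD => (hD.subset hzD).2 rfl⟩, hzo⟩
  have hstep := hr.decomposable_sdiff_union_arc (i := 0) subset_rfl hL le_rfl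
    (fun x hx _ => .inl ⟨Nat.zero_le x, hx⟩) ⟨fun _ => .inl rfl, fun _ => .inl rfl⟩
    (fun D hD => hr.connectedOn_sdiff hz hD) hzero fun D u t hD ht hut =>
      hr.decomposable_union_arc (hD.subset.trans Set.sdiff_subset) hD.connectedOn
        (hr.connectedOn_sdiff hz hD) (hzero D hD) (hL.decomposable D hD) ht hut
  rw [boundary_self, hr.wrap, Set.empty_union, ← Set.empty_union ({z} ∪ {o 0, o 0})] at hstep
  have hIio : Set.Iio N = insert 0 (Set.Ioo 0 N) := by
    have := hr.four_le
    ext k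
    simp only [Set.mem_Iio, Set.mem_insert_iff, Set.mem_Ioo]
    omega
  convert hstep.introduce_set ?_ ?_ using 1
  · rw [hIio, Set.image_insert_eq]
    ext x
    grind
  · refine Set.disjoint_left.2 ?_
    rintro _ (hx | ⟨k, hk, rfl⟩) (hx' | hx')
    · exact hx.2 hx'
    · exact hr.notMem 0 (Nat.zero_le N) (by grind)
    · exact hr.notMem k hk.2.le (hx' ▸ hz)
    · exact hr.ne_of_lt hk.1 hk.2.le (.inr hk.2) (by grind)
  · rw [Set.empty_union, Set.pair_eq_singleton]
    exact (ncard_pair_le _ _).trans (by omega)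

end Ring

end Interior

/-! ### Societies -/

section Society

variable {V : Type*} {H : SimpleGraph V} {pos : V → ℕ} {n : ℕ} {U O Y : Set V}

theorem ConnectedOn.of_sup_edge {A : Set V} {p q : V} (hA : ConnectedOn (H ⊔ edge p q) A)
    (hpq : ¬ (p ∈ A ∧ q ∈ A)) : ConnectedOn H A := by
  refine .of_closed hA.nonempty fun C hCA hC hclosed => hA.subset_of_closed ?_ (by grind)
  rwa [Set.inter_eq_right.2 hCA]

theorem ConnectedOn.exists_of_sup_edge {A : Set V} {p q x : V}
    (hA : ConnectedOn (H ⊔ edge p q) A) (hp : p ∈ A) (hx : x ∈ A) :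
    ∃ C ⊆ A, ConnectedOn H C ∧ x ∈ C ∧ (p ∈ C ∨ q ∈ C) := by
  obtain ⟨C, hC, hxC⟩ := exists_isComponent_mem (H := H) hx
  refine ⟨C, hC.subset, hC.connectedOn, hxC, ?_⟩
  by_contra! hpq
  exact hpq.1 (hA.subset_of_closed ⟨x, hx, hxC⟩ (by grind [hC.mem_of_adj]) hp)

theorem ConnectedOn.union_pair {C : Set V} {a b : V} (hC : ConnectedOn H C)
    (ha : ∃ x ∈ C, H.Adj x a) (hb : ∃ x ∈ C, H.Adj x b) : ConnectedOn H (C ∪ {a, b}) := by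
  obtain ⟨x, hx, hxa⟩ := ha
  obtain ⟨y, hy, hyb⟩ := hb
  convert (hC.insert_of_adj hx hxa).insert_of_adj (.inr hy) hyb using 1
  grind

theorem ConnectedOn.pair {a b : V} (hab : H.Adj a b) : ConnectedOn H (∅ ∪ {a, b}) := by
  rw [Set.empty_union]
  exact (ConnectedOn.singleton b).insert_of_adj rfl hab.symm

theorem Decomposable.union_of_isClique [Finite V] {U₁ U₂ : Set V} (hQ : H.IsClique (U₁ ∩ U₂))
    (hcard : (U₁ ∩ U₂).ncard ≤ n) (hadj : ∀ x ∈ U₁ \ U₂, ∀ y ∈ U₂ \ U₁, ¬ H.Adj x y)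
    (h₁ : Decomposable H n U₁ ∅) (h₂ : Decomposable H n U₂ ∅) :
    Decomposable H n (U₁ ∪ U₂) ∅ := by
  have h₁' := h₁.diff_clique hQ Set.inter_subset_left
  have h₂' := h₂.diff_clique hQ Set.inter_subset_right
  have h := h₁'.union (Set.disjoint_left.2 (by grind)) (by grind) h₂'
  rw [← Set.empty_union (U₁ ∩ U₂)] at h
  convert h.introduce_set (Set.disjoint_left.2 (by grind)) (by rwa [Set.empty_union]) using 1
  ext x
  grind

/-- `a` and `c` lie on the same side of the chord from `b` to `d`, for vertices placed around a
circle in the order of their positions; equivalently, when the positions of `a`, `c` differ from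
those of `b`, `d`, the chords `ac` and `bd` do not cross. -/
def SameSide (pos : V → ℕ) (b d a c : V) : Prop :=
  pos a ∈ Set.uIoo (pos b) (pos d) ↔ pos c ∈ Set.uIoo (pos b) (pos d)

theorem sameSide_iff {a b c d : V} : SameSide pos b d a c ↔
    ((pos b < pos a ∧ pos a < pos d ∨ pos d < pos a ∧ pos a < pos b) ↔
      (pos b < pos c ∧ pos c < pos d ∨ pos d < pos c ∧ pos c < pos b)) := by
  simp only [SameSide, Set.uIoo, Set.mem_Ioo, inf_lt_iff, lt_sup_iff]
  omega

/-- The vertices of `O`, placed around a circle in the order given by `pos`, are the society of the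
subgraph induced on `U`: disjoint connected subsets of `U` do not cross on `O`. -/
structure Society (H : SimpleGraph V) (U O : Set V) (pos : V → ℕ) : Prop where
  subset : O ⊆ U
  injOn : Set.InjOn pos O
  sameSide : ∀ A B, ConnectedOn H A → ConnectedOn H B → Disjoint A B → A ⊆ U → B ⊆ U →
    ∀ a ∈ A ∩ O, ∀ c ∈ A ∩ O, ∀ b ∈ B ∩ O, ∀ d ∈ B ∩ O, SameSide pos b d a c

namespace Society

theorem sameSide_comm (hO : Society H U O pos) {a b c d : V} (ha : a ∈ O) (hb : b ∈ O)
    (hc : c ∈ O) (hd : d ∈ O) (hab : a ≠ b) (had : a ≠ d) (hcb : c ≠ b) (hcd : c ≠ d) :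
    SameSide pos b d a c ↔ SameSide pos a c b d := by
  have hab' := hO.injOn.ne ha hb hab
  have had' := hO.injOn.ne ha hd had
  have hcb' := hO.injOn.ne hc hb hcb
  have hcd' := hO.injOn.ne hc hd hcd
  rw [sameSide_iff, sameSide_iff]
  omega

theorem inter (hO : Society H U O pos) {U' : Set V} (hU' : U' ⊆ U) :
    Society H U' (O ∩ U') pos where
  subset := Set.inter_subset_right
  injOn := hO.injOn.mono Set.inter_subset_left
  sameSide A B hA hB hAB hAU hBU a ha c hc b hb d hd :=
    hO.sameSide A B hA hB hAB (hAU.trans hU') (hBU.trans hU') a ⟨ha.1, ha.2.1⟩ c ⟨hc.1, hc.2.1⟩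
      b ⟨hb.1, hb.2.1⟩ d ⟨hd.1, hd.2.1⟩

theorem sup_edge (hO : Society H U O pos) {p q : V} (hp : p ∈ O) (hq : q ∈ O)
    (hpq : ∀ x ∈ O \ {p, q}, ∀ y ∈ O \ {p, q}, SameSide pos p q x y) :
    Society (H ⊔ edge p q) U O pos := by
  have key : ∀ A B, ConnectedOn (H ⊔ edge p q) A → ConnectedOn (H ⊔ edge p q) B → Disjoint A B →
      A ⊆ U → B ⊆ U → p ∈ A → q ∈ A → ∀ a ∈ A ∩ O, ∀ c ∈ A ∩ O, ∀ b ∈ B ∩ O, ∀ d ∈ B ∩ O,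
      SameSide pos b d a c := by
    intro A B hA hB hAB hAU hBU hpA hqA a ha c hc b hb d hd
    have hne : ∀ x ∈ A, ∀ y ∈ B, x ≠ y := fun x hx y hy => hAB.ne_of_mem hx hy
    have hB' := hB.of_sup_edge fun h => hne p hpA p h.1 rfl
    have hpiece : ∀ x ∈ A ∩ O, SameSide pos b d x p ∨ SameSide pos b d x q := by
      intro x hx
      obtain ⟨C, hCA, hC, hxC, hpqC⟩ := hA.exists_of_sup_edge hpA hx.1
      have := hO.sameSide C B hC hB' (hAB.mono_left hCA) (hCA.trans hAU) hBU x ⟨hxC, hx.2⟩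
      exact hpqC.imp (fun h => this p ⟨h, hp⟩ b hb d hd) fun h => this q ⟨h, hq⟩ b hb d hd
    have hside : SameSide pos b d p q :=
      (hO.sameSide_comm hp hb.2 hq hd.2 (hne p hpA b hb.1) (hne p hpA d hd.1) (hne q hqA b hb.1)
        (hne q hqA d hd.1)).2 (hpq b (by grind) d (by grind))
    have := hpiece a ha
    have := hpiece c hc
    grind [SameSide]
  refine ⟨hO.subset, hO.injOn, fun A B hA hB hAB hAU hBU a ha c hc b hb d hd => ?_⟩
  by_cases hpqA : p ∈ A ∧ q ∈ A
  · exact key A B hA hB hAB hAU hBU hpqA.1 hpqA.2 a ha c hc b hb d hd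
  by_cases hpqB : p ∈ B ∧ q ∈ B
  · have hne : ∀ x ∈ A, ∀ y ∈ B, x ≠ y := fun x hx y hy => hAB.ne_of_mem hx hy
    rw [hO.sameSide_comm ha.2 hb.2 hc.2 hd.2 (hne a ha.1 b hb.1) (hne a ha.1 d hd.1)
      (hne c hc.1 b hb.1) (hne c hc.1 d hd.1)]
    exact key B A hB hA hAB.symm hBU hAU hpqB.1 hpqB.2 b hb d hd a ha c hc
  · exact hO.sameSide A B (hA.of_sup_edge hpqA) (hB.of_sup_edge hpqB) hAB hAU hBU a ha c hc b hb
      d hd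

theorem sameSide_of_connectedOn (hO : Society H U O pos) {C D : Set V} {a b c d : V}
    (hC : ConnectedOn H (C ∪ {a, c})) (hD : ConnectedOn H (D ∪ {b, d})) (hCD : Disjoint C D)
    (hCU : C ⊆ U \ O) (hDU : D ⊆ U \ O) (ha : a ∈ O) (hb : b ∈ O) (hc : c ∈ O) (hd : d ∈ O)
    (hab : a ≠ b) (had : a ≠ d) (hcb : c ≠ b) (hcd : c ≠ d) : SameSide pos b d a c := by
  have hOU := hO.subset
  refine hO.sameSide _ _ hC hD (Set.disjoint_left.2 ?_) (by grind) (by grind)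
    a (by grind) c (by grind) b (by grind) d (by grind)
  grind

end Society

end Society

section SocietyDecomposable

variable {V : Type*} {H : SimpleGraph V} {pos : V → ℕ} {n m : ℕ} {U O Y : Set V}

theorem exists_cyclic_enumeration (hpos : Set.InjOn pos O) (hfin : O.Finite) (hne : 0 < O.ncard) :
    ∃ o : ℕ → V, o O.ncard = o 0 ∧ (∀ k, o k ∈ O) ∧
      StrictMonoOn (pos ∘ o) (Set.Iio O.ncard) ∧ o '' Set.Iio O.ncard = O := by
  classical
  lift O to Finset V using hfin
  rw [Set.ncard_coe_finset] at *
  have hcard : (O.image pos).card = O.card := Finset.card_image_of_injOn hpos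
  set e := (O.image pos).orderEmbOfFin hcard
  have he : ∀ k, ∃ v ∈ O, pos v = e k :=
    fun k => Finset.mem_image.1 (Finset.orderEmbOfFin_mem _ hcard k)
  choose f hfO hf using he
  have hmod : ∀ k ∈ Set.Iio O.card, k % O.card = k := fun k hk => Nat.mod_eq_of_lt hk
  refine ⟨fun k => f ⟨k % O.card, Nat.mod_lt k hne⟩, by simp, fun k => hfO _, ?_, ?_⟩
  · intro a ha b hb hab
    simpa only [Function.comp_apply, hf, e.lt_iff_lt, Fin.mk_lt_mk, hmod a ha, hmod b hb] using hab
  · refine Set.Subset.antisymm (Set.image_subset_iff.2 fun k _ => hfO _) fun x hx => ?_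
    obtain ⟨k, hk⟩ : pos x ∈ Set.range e := by
      rw [Finset.range_orderEmbOfFin]
      exact Finset.mem_image_of_mem pos hx
    refine ⟨k, k.2, hpos (hfO _) hx ?_⟩
    simp only [hf, ← hk, hmod k k.2]

/-- The induction hypothesis of `Society.decomposable`. -/
def SocietyBound (V : Type*) (n m : ℕ) : Prop :=
  ∀ (H : SimpleGraph V) (U O : Set V) (pos : V → ℕ), U.ncard < m → Society H U O pos →
    Decomposable H n (U \ O) ∅ → Decomposable H (n + 3) U ∅

namespace Society

theorem decomposable_sup_edge [Finite V] (hO : Society H U O pos)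
    (ih : SocietyBound V n U.ncard) (hU : Decomposable H n (U \ O) ∅) {p q : V} (hp : p ∈ O)
    (hq : q ∈ O) {U' : Set V} (hU' : U' ⊂ U) (hpqU' : {p, q} ⊆ U')
    (hside : ∀ x ∈ (O ∩ U') \ {p, q}, ∀ y ∈ (O ∩ U') \ {p, q}, SameSide pos p q x y) :
    Decomposable (H ⊔ edge p q) (n + 3) U' ∅ := by
  have hsup := (hO.inter hU'.1).sup_edge ⟨hp, hpqU' (.inl rfl)⟩ ⟨hq, hpqU' (.inr rfl)⟩ hside
  refine ih _ _ _ _ (Set.ncard_lt_ncard hU') hsup ?_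
  have hinter := hU.inter U'
  rw [Set.empty_inter] at hinter
  convert hinter.of_adj_imp (H' := H ⊔ edge p q) (by grind) using 1
  grind

theorem decomposable_of_separation [Finite V] (hO : Society H U O pos)
    (ih : SocietyBound V n U.ncard) (hU : Decomposable H n (U \ O) ∅) {p q : V} (hp : p ∈ O)
    (hq : q ∈ O) {Z : Set V} (hZU : Z ⊆ U \ {p, q}) (hZ : Z.Nonempty)
    (hZ' : ((U \ Z) \ {p, q}).Nonempty)
    (hadj : ∀ x ∈ Z, ∀ y ∈ U \ Z, H.Adj x y → y ∈ ({p, q} : Set V))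
    (hin : ∀ x ∈ O ∩ Z, ∀ y ∈ O ∩ Z, SameSide pos p q x y)
    (hout : ∀ x ∈ (O \ Z) \ {p, q}, ∀ y ∈ (O \ Z) \ {p, q}, SameSide pos p q x y) :
    Decomposable H (n + 3) U ∅ := by
  obtain ⟨z, hz⟩ := hZ
  obtain ⟨w, hw⟩ := hZ'
  have hOU := hO.subset
  have hinter : (Z ∪ {p, q}) ∩ (U \ Z) = {p, q} := by grind
  have hunion : (Z ∪ {p, q}) ∪ (U \ Z) = U := by grind
  have h₁ := hO.decomposable_sup_edge (U' := Z ∪ {p, q}) ih hU hp hq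
    ⟨by grind, fun h => by grind [h hw.1.1]⟩ (by grind) (by grind)
  have h₂ := hO.decomposable_sup_edge (U' := U \ Z) ih hU hp hq
    ⟨by grind, fun h => (h (hZU hz).1).2 hz⟩ (by grind) (by grind)
  rw [← hunion]
  refine Decomposable.of_adj_imp (H := H ⊔ edge p q) ?_ fun _ _ _ _ hxy => .inl hxy
  refine h₁.union_of_isClique ?_ ?_ (by grind) h₂
  · rw [hinter]
    intro a ha b hb hab
    grind
  · rw [hinter]
    exact (ncard_pair_le p q).trans (by omega)

/-- If a component of `U \ O` touches `p`, `q` and no vertex of `O` on the side of `pq` containing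
`g`, then `{p, q}` separates it from that side. -/
theorem decomposable_of_gap [Finite V] (hO : Society H U O pos) (ih : SocietyBound V n U.ncard)
    (hU : Decomposable H n (U \ O) ∅) (hY : IsComponent H (U \ O) Y) {p q g : V} (hp : p ∈ O)
    (hq : q ∈ O) (hg : g ∈ O \ {p, q}) (hpY : ∃ y ∈ Y, H.Adj y p)
    (hqY : ∃ y ∈ Y, H.Adj y q)
    (hgap : ∀ x ∈ O \ {p, q}, SameSide pos p q g x → ∀ y ∈ Y, ¬ H.Adj y x) :
    Decomposable H (n + 3) U ∅ := by
  have hOU := hO.subset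
  have hYU := hY.subset
  obtain ⟨y, hy⟩ := hY.nonempty
  set X := (U \ Y) \ {p, q}
  set Z := ⋃₀ {C | IsComponent H X C ∧ ∃ s ∈ C ∩ O, SameSide pos p q g s}
  have hZX : Z ⊆ X := Set.sUnion_subset fun C hC => hC.1.subset
  have hZside : ∀ x ∈ O ∩ Z, SameSide pos p q g x := by
    rintro x ⟨hxO, C, ⟨hC, s, ⟨hsC, hsO⟩, hs⟩, hxC⟩
    have hCX := hC.subset
    refine hs.trans (hO.sameSide C (Y ∪ {p, q}) hC.connectedOn
      (hY.connectedOn.union_pair hpY hqY) (Set.disjoint_left.2 (by grind)) (by grind) (by grind)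
      s ⟨hsC, hsO⟩ x ⟨hxC, hxO⟩ p (by grind) q (by grind))
  have hmem : ∀ x ∈ O \ {p, q}, SameSide pos p q g x → x ∈ Z := by
    intro x hx hgx
    obtain ⟨C, hC, hxC⟩ := exists_isComponent_mem (H := H) (X := X) (x := x) (by grind)
    exact ⟨C, ⟨hC, x, ⟨hxC, hx.1⟩, hgx⟩, hxC⟩
  refine hO.decomposable_of_separation ih hU hp hq (Z := Z) (by grind) ⟨g, hmem g hg .rfl⟩
    ⟨y, by grind⟩ ?_ (fun x hx x' hx' => (hZside x hx).symm.trans (hZside x' hx'))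
    (by grind [SameSide])
  rintro x ⟨C, hC, hxC⟩ z hz hxz
  by_contra hzpq
  by_cases hzY : z ∈ Y
  · have hxX := hC.1.subset hxC
    have hxO : x ∈ O := by
      by_contra hxO
      exact hxX.1.2 (hY.mem_of_adj z hzY x ⟨hxX.1.1, hxO⟩ hxz.symm)
    exact hgap x ⟨hxO, hxX.2⟩ (hZside x ⟨hxO, C, hC, hxC⟩) z hzY hxz.symm
  · exact hz.2 ⟨C, hC, hC.1.mem_of_adj x hxC z ⟨⟨hz.1, hzY⟩, hzpq⟩ hxz⟩

theorem exists_gap {A : Set V} (hA : A.Nonempty) (hfin : A.Finite) {g : V}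
    (hpos : Set.InjOn pos (insert g A)) (hg : g ∉ A) :
    ∃ p ∈ A, ∃ q ∈ A, ∀ x ∈ A \ {p, q}, ¬ SameSide pos p q g x := by
  have hne : ∀ x ∈ A, pos x ≠ pos g := fun x hx => hpos.ne (.inr hx) (.inl rfl) (by grind)
  have hinj : ∀ x ∈ A, ∀ y ∈ A, x ≠ y → pos x ≠ pos y :=
    fun x hx y hy => hpos.ne (.inr hx) (.inr hy)
  by_cases hmid : (∃ x ∈ A, pos x < pos g) ∧ ∃ x ∈ A, pos g < pos x
  · obtain ⟨p, ⟨hpA, hpg⟩, hmax⟩ := Set.exists_max_image {x ∈ A | pos x < pos g} pos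
      (hfin.subset (Set.sep_subset _ _)) hmid.1
    obtain ⟨q, ⟨hqA, hqg⟩, hmin⟩ := Set.exists_min_image {x ∈ A | pos g < pos x} pos
      (hfin.subset (Set.sep_subset _ _)) hmid.2
    refine ⟨p, hpA, q, hqA, fun x hx => ?_⟩
    have := hmax x
    have := hmin x
    rw [sameSide_iff]
    grind
  · obtain ⟨p, hpA, hmin⟩ := Set.exists_min_image A pos hfin hA
    obtain ⟨q, hqA, hmax⟩ := Set.exists_max_image A pos hfin hA
    refine ⟨p, hpA, q, hqA, fun x hx => ?_⟩
    rw [sameSide_iff]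
    grind

theorem decomposable_of_not_adj [Finite V] (hO : Society H U O pos)
    (ih : SocietyBound V n U.ncard) (hU : Decomposable H n (U \ O) ∅)
    (hY : IsComponent H (U \ O) Y) {g : V} (hg : g ∈ O) (hgY : ∀ y ∈ Y, ¬ H.Adj y g) :
    Decomposable H (n + 3) U ∅ := by
  have hOU := hO.subset
  have hYU := hY.subset
  set A := {x ∈ O | ∃ y ∈ Y, H.Adj y x}
  obtain hAe | hAne := A.eq_empty_or_nonempty
  · have hnot : ∀ x ∈ O, ∀ y ∈ Y, ¬ H.Adj y x :=
      fun x hx y hy hyx => hAe.subset ⟨hx, y, hy, hyx⟩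
    obtain ⟨y, hy⟩ := hY.nonempty
    have hYdec := (hU.inter Y).mono (m := n + 3) (by omega)
    rw [Set.inter_eq_right.2 hYU, Set.empty_inter] at hYdec
    have hrest : Decomposable H (n + 3) (U \ Y) ∅ := by
      refine ih H (U \ Y) O pos (Set.ncard_lt_ncard ⟨Set.sdiff_subset, by grind⟩) ?_ ?_
      · convert hO.inter (U' := U \ Y) Set.sdiff_subset using 1
        grind
      · convert hU.inter (U \ Y) using 1 <;> grind
    rw [← Set.union_sdiff_cancel (hYU.trans Set.sdiff_subset)]
    exact hYdec.union Set.disjoint_sdiff_right (by grind [hY.mem_of_adj]) hrest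
  · obtain ⟨p, hp, q, hq, hgap⟩ := exists_gap hAne A.toFinite
      (hO.injOn.mono (by grind)) (g := g) (by grind)
    exact hO.decomposable_of_gap ih hU hY hp.1 hq.1 (g := g) (by grind) hp.2 hq.2 (by grind)

theorem exists_not_sameSide [Finite V] (hpos : Set.InjOn pos O) (hcard : 4 ≤ O.ncard) :
    ∃ p ∈ O, ∃ q ∈ O, ∃ r ∈ O \ {p, q}, ∃ s ∈ O \ {p, q}, ¬ SameSide pos p q r s := by
  obtain ⟨o, -, ho, hlt, -⟩ := exists_cyclic_enumeration hpos (O.toFinite) (by omega)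
  have hlt' : ∀ i j, i < j → j < 4 → pos (o i) < pos (o j) := fun i j hij hj =>
    hlt (Set.mem_Iio.2 (by omega)) (Set.mem_Iio.2 (by omega)) hij
  have h01 := hlt' 0 1 (by omega) (by omega)
  have h12 := hlt' 1 2 (by omega) (by omega)
  have h23 := hlt' 2 3 (by omega) (by omega)
  refine ⟨o 0, ho 0, o 2, ho 2, o 1, ⟨ho 1, by grind⟩, o 3, ⟨ho 3, by grind⟩, ?_⟩
  rw [sameSide_iff]
  omega

theorem decomposable_self [Finite V] (hO : Society H O O pos) (ih : SocietyBound V n O.ncard)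
    (hcard : 4 ≤ O.ncard) : Decomposable H (n + 3) O ∅ := by
  have key : ∀ p ∈ O, ∀ q ∈ O, ∀ r ∈ O \ {p, q}, ∀ s ∈ O \ {p, q}, ¬ SameSide pos p q r s →
      (∀ x ∈ O \ {p, q}, ∀ y ∈ O \ {p, q}, H.Adj x y → SameSide pos p q x y) →
      Decomposable H (n + 3) O ∅ := by
    intro p hp q hq r hr s hs hrs hadj
    have hempty : Decomposable H n (O \ O) ∅ := by rw [Set.sdiff_self]; exact .empty ∅
    refine hO.decomposable_of_separation ih hempty hp hq
      (Z := {x ∈ O \ {p, q} | SameSide pos p q r x}) (Set.sep_subset _ _) ⟨r, hr, .rfl⟩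
      ⟨s, by grind⟩ ?_ ?_ ?_ <;> grind [SameSide]
  by_cases hchord : ∃ p ∈ O, ∃ q ∈ O, H.Adj p q ∧
      ∃ r ∈ O \ {p, q}, ∃ s ∈ O \ {p, q}, ¬ SameSide pos p q r s
  · obtain ⟨p, hp, q, hq, hpq, r, hr, s, hs, hrs⟩ := hchord
    refine key p hp q hq r hr s hs hrs fun x hx y hy hxy => ?_
    exact hO.sameSide_of_connectedOn (.pair hxy) (.pair hpq) (Set.disjoint_empty _)
      (Set.empty_subset _) (Set.empty_subset _) hx.1 hp hy.1 hq (by grind) (by grind) (by grind)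
      (by grind)
  · obtain ⟨p, hp, q, hq, r, hr, s, hs, hrs⟩ := exists_not_sameSide hO.injOn hcard
    refine key p hp q hq r hr s hs hrs fun x hx y hy hxy => ?_
    by_contra hside
    rw [hO.sameSide_comm hx.1 hp hy.1 hq (by grind) (by grind) (by grind) (by grind)] at hside
    exact hchord ⟨x, hx.1, y, hy.1, hxy, p, by grind, q, by grind, hside⟩

theorem ring (hO : Society H U O pos) (hcard : 4 ≤ O.ncard)
    (hY : ConnectedOn H Y) (hYU : Y ⊆ U \ O) (hadj : ∀ x ∈ O, ∃ y ∈ Y, H.Adj y x) {o : ℕ → V}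
    (hwrap : o O.ncard = o 0) (ho : ∀ k, o k ∈ O)
    (hlt : StrictMonoOn (pos ∘ o) (Set.Iio O.ncard)) : Ring H o O.ncard Y := by
  have hlt' : ∀ i j, i < j → j < O.ncard → pos (o i) < pos (o j) := fun i j hij hj =>
    hlt (hij.trans hj) hj hij
  have hne : ∀ i j, i ≠ j → i < O.ncard → j < O.ncard → o i ≠ o j := fun i j hij hi hj h =>
    hij (hlt.injOn hi hj (congrArg pos h))
  refine ⟨hcard, hwrap, fun i hi j hj h => hlt.injOn hi hj (congrArg pos h), hY,
    fun k _ hk => (hYU hk).2 (ho k), fun k _ => hadj _ (ho k), ?_, ?_⟩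
  · intro a b hab hb hadj'
    by_contra! hcon
    obtain ⟨d, hd, hda, hdb, hside⟩ : ∃ d < O.ncard, d ≠ a ∧ d ≠ b ∧
        (pos (o d) < pos (o a) ∨ pos (o b) < pos (o d)) := by
      by_cases ha : a = 0
      · exact ⟨O.ncard - 1, by omega, by omega, by omega, .inr (hlt' _ _ (by omega) (by omega))⟩
      · exact ⟨0, by omega, by omega, by omega, .inl (hlt' _ _ (by omega) (by omega))⟩
    have h₁ := hlt' a (a + 1) (by omega) (by omega)
    have h₂ := hlt' (a + 1) b (by omega) (by omega)
    have := hO.sameSide_of_connectedOn (hY.union_pair (hadj _ (ho (a + 1))) (hadj _ (ho d)))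
      (.pair hadj') (Set.disjoint_empty _) hYU (Set.empty_subset _) (ho _) (ho _) (ho _) (ho _)
      (hne _ _ (by omega) (by omega) (by omega)) (hne _ _ (by omega) (by omega) (by omega))
      (hne _ _ (by omega) (by omega) (by omega)) (hne _ _ (by omega) (by omega) (by omega))
    rw [sameSide_iff] at this
    omega
  · intro C D hC hD hCD hCY hDY a b c d hab hbc hcd hdN hCa hDb hCc hDd
    have h₁ := hlt' a b hab (by omega)
    have h₂ := hlt' b c hbc (by omega)
    have h₃ := hlt' c d hcd (by omega)
    have := hO.sameSide_of_connectedOn (hC.union_pair hCa hCc) (hD.union_pair hDb hDd) hCD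
      (hCY.trans hYU) (hDY.trans hYU) (ho _) (ho _) (ho _) (ho _) (by grind) (by grind)
      (by grind) (by grind)
    rw [sameSide_iff] at this
    omega

theorem isComponent_unique [Finite V] (hO : Society H U O pos) (hcard : 4 ≤ O.ncard)
    (hadj : ∀ C, IsComponent H (U \ O) C → ∀ x ∈ O, ∃ y ∈ C, H.Adj y x) {C D : Set V}
    (hC : IsComponent H (U \ O) C) (hD : IsComponent H (U \ O) D) : C = D := by
  by_contra hCD
  obtain ⟨p, hp, q, hq, r, hr, s, hs, hrs⟩ := exists_not_sameSide hO.injOn hcard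
  exact hrs (hO.sameSide_of_connectedOn
    (hC.connectedOn.union_pair (hadj C hC r hr.1) (hadj C hC s hs.1))
    (hD.connectedOn.union_pair (hadj D hD p hp) (hadj D hD q hq)) (hC.disjoint hD hCD)
    hC.subset hD.subset hr.1 hp hs.1 hq (by grind) (by grind) (by grind) (by grind))

end Society

theorem societyBound [Finite V] (n m : ℕ) : SocietyBound V n m := by
  induction m with
  | zero => exact fun H U O pos h => absurd h (Nat.not_lt_zero _)
  | succ m ih =>
    intro H U O pos hlt hO hU
    have ih : SocietyBound V n U.ncard := fun H' U' O' pos' h => ih H' U' O' pos' (by omega)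
    by_cases hcard : O.ncard ≤ 3
    · have h := hU.union_bag hcard
      rw [← Set.sdiff_union_of_subset hO.subset]
      exact h.introduce_set Set.disjoint_sdiff_left (by rw [Set.empty_union]; omega)
    by_cases hadj : ∀ C, IsComponent H (U \ O) C → ∀ x ∈ O, ∃ y ∈ C, H.Adj y x
    · obtain hempty | ⟨y, hy⟩ := (U \ O).eq_empty_or_nonempty
      · obtain rfl := (Set.sdiff_eq_empty.1 hempty).antisymm hO.subset
        exact hO.decomposable_self ih (by omega)
      obtain ⟨Y, hY, -⟩ := exists_isComponent_mem (H := H) hy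
      have hYU : Y = U \ O := hY.subset.antisymm fun z hz => by
        obtain ⟨C, hC, hzC⟩ := exists_isComponent_mem (H := H) hz
        rwa [hO.isComponent_unique (by omega) hadj hY hC]
      obtain ⟨o, hwrap, ho, hlt, himage⟩ :=
        exists_cyclic_enumeration hO.injOn O.toFinite (by omega)
      have hring := hO.ring (by omega) hY.connectedOn hY.subset (hadj Y hY) hwrap ho hlt
      have h := hring.decomposable (hYU ▸ hU)
      rwa [himage, hYU, Set.sdiff_union_of_subset hO.subset] at h
    · push Not at hadj
      obtain ⟨C, hC, g, hg, hgC⟩ := hadj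
      exact hO.decomposable_of_not_adj ih hU hC hg hgC

theorem Society.decomposable [Finite V] (hO : Society H U O pos)
    (hU : Decomposable H n (U \ O) ∅) : Decomposable H (n + 3) U ∅ :=
  societyBound n _ H U O pos (Nat.lt_succ_self _) hO hU

end SocietyDecomposable

/-! ### Crossing parities -/

section Parity

variable {V : Type*} {H : SimpleGraph V} {n : ℕ} {U O : Set V} {L : V → V → ZMod 2}

/-- `U` cannot be disconnected by removing a vertex. -/
def BiconnectedOn (H : SimpleGraph V) (U : Set V) : Prop :=
  ∀ v, (U \ {v}).Nonempty → ConnectedOn H (U \ {v})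

namespace BiconnectedOn

theorem exists_isComponent_larger (hU : BiconnectedOn H U) {A K : Set V} {b v : V} (hAU : A ⊆ U)
    (hA : A.Nonempty) (hA' : ConnectedOn H (U \ A)) (hv : v ∈ U \ A)
    (hK : IsComponent H ((U \ A) \ {v}) K) (hbK : b ∈ K) (hne : K ≠ (U \ A) \ {v}) :
    ∃ w ∈ U \ A, w ≠ b ∧ (∃ x ∈ A, H.Adj x w) ∧
      ∃ K', IsComponent H ((U \ A) \ {w}) K' ∧ b ∈ K' ∧ K ⊂ K' := by
  have hKU := hK.subset
  obtain ⟨g, hg, hgK⟩ := Set.exists_of_ssubset (hKU.ssubset_of_ne hne)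
  obtain ⟨a, ha⟩ := hA
  obtain ⟨w, hw, x, hx, hwx⟩ := (hU v ⟨g, hg.1.1, hg.2⟩).exists_adj_of_ssubset
    (C := ((U \ A) \ {v}) \ K) ⟨g, hg, hgK⟩ ⟨by grind, fun h => (h ⟨hAU ha, by grind⟩).1.1.2 ha⟩
  have hxA : x ∈ A := by
    have := fun hxK : x ∈ K => hK.mem_of_adj x hxK w hw.1 hwx.symm
    grind
  have hwb : w ≠ b := by grind
  obtain ⟨y, hy, u, hu, hyu⟩ := hA'.exists_adj_of_ssubset ⟨b, hbK⟩
    ⟨by grind, fun h => (hKU (h hv)).2 rfl⟩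
  have huv : u = v := by
    by_contra huv
    exact hu.2 (hK.mem_of_adj y hy u ⟨hu.1, huv⟩ hyu)
  obtain ⟨K', hK', hbK'⟩ := exists_isComponent_mem (H := H) (X := (U \ A) \ {w}) (x := b) (by grind)
  have hsub : insert v K ⊆ K' := hK'.subset_of_connectedOn
    (hK.connectedOn.insert_of_adj hy (huv ▸ hyu)) (by grind) ⟨b, .inr hbK, hbK'⟩
  exact ⟨w, hw.1.1, hwb, ⟨x, hxA, hwx.symm⟩, K', hK', hbK', (Set.subset_insert v K).trans hsub,
    fun h => (hKU (h (hsub (.inl rfl)))).2 rfl⟩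

theorem exists_insert [Finite V] (hU : BiconnectedOn H U) {A : Set V} {b c : V} (hAU : A ⊆ U)
    (hA : A.Nonempty) (hA' : ConnectedOn H (U \ A)) (hb : b ∈ U \ A) (hc : c ∈ U \ A)
    (hbc : c ≠ b) :
    ∃ v ∈ U \ A, v ≠ b ∧ (∃ x ∈ A, H.Adj x v) ∧ ConnectedOn H ((U \ A) \ {v}) := by
  obtain ⟨x, hx, v₀, hv₀, hxv₀⟩ := (hU b ⟨c, hc.1, hbc⟩).exists_adj_of_ssubset hA
    ⟨by grind, fun h => hc.2 (h ⟨hc.1, hbc⟩)⟩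
  obtain ⟨K₀, hK₀, hbK₀⟩ := exists_isComponent_mem (H := H) (X := (U \ A) \ {v₀}) (x := b)
    (by grind)
  obtain ⟨K, ⟨⟨v, hv, hvb, hvA, hK⟩, hbK⟩, hmax⟩ := Set.exists_max_image
    {K | (∃ v ∈ U \ A, v ≠ b ∧ (∃ x ∈ A, H.Adj x v) ∧ IsComponent H ((U \ A) \ {v}) K) ∧ b ∈ K}
    Set.ncard (Set.toFinite _)
    ⟨K₀, ⟨v₀, by grind, by grind, ⟨x, hx, hxv₀⟩, hK₀⟩, hbK₀⟩
  refine ⟨v, hv, hvb, hvA, ?_⟩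
  by_contra hcon
  obtain ⟨w, hw, hwb, hwA, K', hK', hbK', hlt⟩ := hU.exists_isComponent_larger hAU hA hA' hv hK hbK
    fun h => hcon (h ▸ hK.connectedOn)
  exact (Set.ncard_lt_ncard hlt).not_ge (hmax K' ⟨⟨w, hw, hwb, hwA, hK'⟩, hbK'⟩)

theorem exists_disjoint_connectedOn [Finite V] (hU : BiconnectedOn H U) {a b c d : V}
    (ha : a ∈ U) (hb : b ∈ U) (hc : c ∈ U) (hd : d ∈ U) (hab : a ≠ b) (hac : a ≠ c)
    (had : a ≠ d) (hbc : b ≠ c) (hcd : c ≠ d) :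
    ∃ A B, ConnectedOn H A ∧ ConnectedOn H B ∧ Disjoint A B ∧ a ∈ A ∧ b ∈ B ∧
      (c ∈ A ∧ d ∈ B ∨ d ∈ A ∧ c ∈ B) := by
  obtain ⟨A, ⟨hA, hA', hAU, haA, hbcd⟩, hmax⟩ := Set.exists_max_image
    {A | ConnectedOn H A ∧ ConnectedOn H (U \ A) ∧ A ⊆ U ∧ a ∈ A ∧ Disjoint A {b, c, d}}
    Set.ncard (Set.toFinite _)
    ⟨{a}, .singleton a, hU a ⟨b, hb, hab.symm⟩, by grind, rfl, Set.disjoint_left.2 (by grind)⟩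
  obtain ⟨v, hv, hvb, ⟨x, hx, hxv⟩, hconn⟩ := hU.exists_insert (b := b) (c := c) hAU ⟨a, haA⟩ hA'
    (by grind) (by grind) hbc.symm
  have hAv := hA.insert_of_adj hx hxv
  rw [Set.sdiff_sdiff, Set.union_singleton] at hconn
  by_cases hvcd : v = c ∨ v = d
  · exact ⟨insert v A, U \ insert v A, hAv, hconn, Set.disjoint_sdiff_right, .inr haA, by grind,
      by grind⟩
  · have hle := hmax (insert v A)
      ⟨hAv, hconn, by grind, .inr haA, Set.disjoint_left.2 (by grind)⟩
    rw [Set.ncard_insert_of_notMem hv.2] at hle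
    omega

end BiconnectedOn

theorem exists_lt_of_total {S : Set V} (hS : S.Finite) {R : V → V → Prop}
    (hirrefl : ∀ a ∈ S, ¬ R a a) (htrans : ∀ a ∈ S, ∀ b ∈ S, ∀ c ∈ S, R a b → R b c → R a c)
    (htotal : ∀ a ∈ S, ∀ b ∈ S, a ≠ b → R a b ∨ R b a) :
    ∃ pos : V → ℕ, Set.InjOn pos S ∧ ∀ a ∈ S, ∀ b ∈ S, R a b ↔ pos a < pos b := by
  have hlt : ∀ a ∈ S, ∀ b ∈ S, R a b → {w ∈ S | R w a}.ncard < {w ∈ S | R w b}.ncard :=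
    fun a ha b hb hab => Set.ncard_lt_ncard
      ⟨fun w hw => ⟨hw.1, htrans w hw.1 a ha b hb hw.2 hab⟩,
        fun h => hirrefl a ha (h ⟨ha, hab⟩).2⟩ (hS.subset (Set.sep_subset _ _))
  refine ⟨fun v => {w ∈ S | R w v}.ncard, fun a ha b hb hab => ?_, fun a ha b hb =>
    ⟨hlt a ha b hb, fun h => ?_⟩⟩
  · by_contra hne
    rcases htotal a ha b hb hne with h | h
    · exact (hlt a ha b hb h).ne hab
    · exact (hlt b hb a ha h).ne' hab
  · have hne : a ≠ b := by rintro rfl; exact h.ne rfl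
    exact (htotal a ha b hb hne).resolve_right fun h' => h.not_gt (hlt b hb a ha h')

/-- `L a b` behaves like a crossing parity of rays that leave the vertices `a`, `b` of `O` for
infinity without meeting the drawing of `H` elsewhere. Two disjoint connected sets extended by two
rays each are curves from infinity to infinity, and these cross an even number of times. -/
structure CrossingParity (H : SimpleGraph V) (O : Set V) (L : V → V → ZMod 2) : Prop where
  add_swap : ∀ a ∈ O, ∀ b ∈ O, a ≠ b → L a b + L b a = 1
  sum_eq_zero : ∀ A B, ConnectedOn H A → ConnectedOn H B → Disjoint A B →
    ∀ a ∈ A ∩ O, ∀ c ∈ A ∩ O, ∀ b ∈ B ∩ O, ∀ d ∈ B ∩ O, L a b + L c b + L a d + L c d = 0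

namespace CrossingParity

theorem switch (hL : CrossingParity H O L) (h : V → ZMod 2) :
    CrossingParity H O fun a b => L a b + h a + h b where
  add_swap a ha b hb hab := by
    linear_combination hL.add_swap a ha b hb hab + CharTwo.add_self_eq_zero (h a) +
      CharTwo.add_self_eq_zero (h b)
  sum_eq_zero A B hA hB hAB a ha c hc b hb d hd := by
    linear_combination hL.sum_eq_zero A B hA hB hAB a ha c hc b hb d hd +
      CharTwo.add_self_eq_zero (h a) + CharTwo.add_self_eq_zero (h b) +
      CharTwo.add_self_eq_zero (h c) + CharTwo.add_self_eq_zero (h d)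

theorem eq_zero_iff (hL : CrossingParity H O L) {a b : V} (ha : a ∈ O) (hb : b ∈ O)
    (hab : a ≠ b) : L a b = 0 ↔ L b a = 1 := by
  have h := hL.add_swap a ha b hb hab
  generalize L a b = x, L b a = y at *
  revert x y
  decide

theorem eq_zero_or_eq_one (x : ZMod 2) : x = 0 ∨ x = 1 := by
  revert x
  decide

/-- If `L a b = L b c = L c a = 1`, then joining `z` to one of `a`, `b`, `c` and the other two to
each other by disjoint connected sets gives an odd total. -/
theorem trans [Finite V] (hL : CrossingParity H O L) (hU : BiconnectedOn H U) {z : V}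
    (hz : z ∈ O ∩ U) (hzL : ∀ a ∈ O, a ≠ z → L z a = 1) {a b c : V} (ha : a ∈ O ∩ U)
    (hb : b ∈ O ∩ U) (hc : c ∈ O ∩ U) (hab : a ≠ b) (hbc : b ≠ c) (hac : a ≠ c)
    (hLab : L a b = 1) (hLbc : L b c = 1) : L a c = 1 := by
  by_contra hLac
  have hLac := (eq_zero_or_eq_one _).resolve_right hLac
  have hLca := (hL.eq_zero_iff ha.1 hc.1 hac).1 hLac
  have hLba := (hL.eq_zero_iff hb.1 ha.1 hab.symm).2 hLab
  have hLcb := (hL.eq_zero_iff hc.1 hb.1 hbc.symm).2 hLbc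
  have hzero : ∀ x ∈ O, x ≠ z → L x z = 0 :=
    fun x hx hxz => (hL.eq_zero_iff hx hz.1 hxz).2 (hzL x hx hxz)
  have haz : a ≠ z := by rintro rfl; have := hzero c hc.1 hac.symm; simp_all
  have hbz : b ≠ z := by rintro rfl; have := hzero a ha.1 hab; simp_all
  have hcz : c ≠ z := by rintro rfl; have := hzero b hb.1 hbc; simp_all
  obtain ⟨A, B, hA, hB, hAB, hzA, haB, ⟨hbA, hcB⟩ | ⟨hcA, hbB⟩⟩ :=
    hU.exists_disjoint_connectedOn hz.2 ha.2 hb.2 hc.2 haz.symm hbz.symm hcz.symm hab hbc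
  · have := hL.sum_eq_zero A B hA hB hAB z ⟨hzA, hz.1⟩ b ⟨hbA, hb.1⟩ a ⟨haB, ha.1⟩ c ⟨hcB, hc.1⟩
    rw [hzL a ha.1 haz, hzL c hc.1 hcz, hLba, hLbc] at this
    exact absurd this (by decide)
  · have := hL.sum_eq_zero A B hA hB hAB z ⟨hzA, hz.1⟩ c ⟨hcA, hc.1⟩ a ⟨haB, ha.1⟩ b ⟨hbB, hb.1⟩
    rw [hzL a ha.1 haz, hzL b hb.1 hbz, hLca, hLcb] at this
    exact absurd this (by decide)

theorem society (hL : CrossingParity H O L) {pos : V → ℕ} (hpos : Set.InjOn pos (O ∩ U))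
    (hlt : ∀ a ∈ O ∩ U, ∀ b ∈ O ∩ U, a ≠ b → (L a b = 1 ↔ pos a < pos b)) :
    Society H U (O ∩ U) pos := by
  refine ⟨Set.inter_subset_right, hpos, fun A B hA hB hAB _ _ a ha c hc b hb d hd => ?_⟩
  have hL_eq : ∀ x ∈ A ∩ (O ∩ U), ∀ y ∈ B ∩ (O ∩ U),
      pos x ≠ pos y ∧ L x y = if pos x < pos y then 1 else 0 := by
    intro x hx y hy
    have hxy := hAB.ne_of_mem hx.1 hy.1
    have := hlt x hx.2 y hy.2 hxy
    have := eq_zero_or_eq_one (L x y)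
    exact ⟨hpos.ne hx.2 hy.2 hxy, by grind⟩
  have hsum := hL.sum_eq_zero A B hA hB hAB a ⟨ha.1, ha.2.1⟩ c ⟨hc.1, hc.2.1⟩ b ⟨hb.1, hb.2.1⟩
    d ⟨hd.1, hd.2.1⟩
  obtain ⟨hab, hLab⟩ := hL_eq a ha b hb
  obtain ⟨hcb, hLcb⟩ := hL_eq c hc b hb
  obtain ⟨had, hLad⟩ := hL_eq a ha d hd
  obtain ⟨hcd, hLcd⟩ := hL_eq c hc d hd
  rw [hLab, hLcb, hLad, hLcd] at hsum
  rw [sameSide_iff]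
  revert hsum
  split_ifs <;> first | omega | exact fun h => absurd h (by decide)

theorem exists_society [Finite V] (hL : CrossingParity H O L) (hU : BiconnectedOn H U)
    (hne : (O ∩ U).Nonempty) : ∃ pos, Society H U (O ∩ U) pos := by
  classical
  obtain ⟨z, hz⟩ := hne
  obtain ⟨h, hh⟩ : ∃ h : V → ZMod 2, ∀ a, a ≠ z → L z a + h z + h a = 1 := by
    refine ⟨fun a => if a = z then 0 else L z a + 1, fun a ha => ?_⟩
    simp only [if_pos, if_neg ha]
    linear_combination CharTwo.add_self_eq_zero (L z a)
  replace hL := hL.switch h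
  set L' := fun a b => L a b + h a + h b
  have htrans : ∀ a ∈ O ∩ U, ∀ b ∈ O ∩ U, ∀ c ∈ O ∩ U, a ≠ b ∧ L' a b = 1 → b ≠ c ∧ L' b c = 1 →
      a ≠ c ∧ L' a c = 1 := by
    rintro a ha b hb c hc ⟨hab, hLab⟩ ⟨hbc, hLbc⟩
    have hac : a ≠ c := by
      rintro rfl
      have := (hL.eq_zero_iff ha.1 hb.1 hab).2 hLbc
      simp_all
    exact ⟨hac, hL.trans hU hz (fun a _ ha => hh a ha) ha hb hc hab hbc hac hLab hLbc⟩
  have htotal : ∀ a ∈ O ∩ U, ∀ b ∈ O ∩ U, a ≠ b → (a ≠ b ∧ L' a b = 1) ∨ (b ≠ a ∧ L' b a = 1) := by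
    intro a ha b hb hab
    have := hL.eq_zero_iff ha.1 hb.1 hab
    have := eq_zero_or_eq_one (L' a b)
    grind
  obtain ⟨pos, hpos, hlt⟩ :=
    exists_lt_of_total (O ∩ U).toFinite (fun a _ h => h.1 rfl) htrans htotal
  exact ⟨pos, hL.society hpos fun a ha b hb hab => by grind⟩

theorem decomposable [Finite V] (hL : CrossingParity H O L)
    (hU : Decomposable H n (U \ O) ∅) : Decomposable H (n + 3) U ∅ := by
  induction hm : U.ncard using Nat.strong_induction_on generalizing U with
  | _ m ih =>
    have hproper : ∀ U' ⊂ U, Decomposable H (n + 3) U' ∅ := by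
      intro U' hU'
      refine ih _ (hm ▸ Set.ncard_lt_ncard hU') ?_ rfl
      convert hU.inter U' using 1 <;> grind
    by_cases hbi : BiconnectedOn H U
    · obtain hempty | hne := (O ∩ U).eq_empty_or_nonempty
      · rw [sdiff_eq_left.2 (Set.disjoint_iff_inter_eq_empty.2 (Set.inter_comm O U ▸ hempty))] at hU
        exact hU.mono (by omega)
      · obtain ⟨pos, hpos⟩ := hL.exists_society hbi hne
        refine hpos.decomposable ?_
        convert hU using 1
        grind
    · simp only [BiconnectedOn, not_forall] at hbi
      obtain ⟨v, ⟨x, hx⟩, hv⟩ := hbi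
      obtain ⟨C, hC, hxC⟩ := exists_isComponent_mem (H := H) hx
      have hCU := hC.subset
      obtain ⟨y, hy, hyC⟩ := Set.exists_of_ssubset
        (hCU.ssubset_of_ne fun h => hv (h ▸ hC.connectedOn))
      have hunion : (C ∪ {v} ∩ U) ∪ (U \ C) = U := by grind
      have hinter : (C ∪ {v} ∩ U) ∩ (U \ C) ⊆ {v} := by grind
      have hsub := Set.subsingleton_singleton.anti hinter
      rw [← hunion]
      refine .union_of_isClique (fun a ha b hb hab => absurd (hsub ha hb) hab)
        ((Set.ncard_le_one_iff_subsingleton.2 hsub).trans (by omega)) (by grind [hC.mem_of_adj])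
        (hproper _ ⟨by grind, fun h => by grind [h hy.1]⟩)
        (hproper _ ⟨Set.sdiff_subset, fun h => (h hx.1).2 hxC⟩)

end CrossingParity

end Parity

/-! ### Drawings with rays -/

section Drawing

/-- The indicator, modulo 2, of `p` lying strictly to the left of `q`. -/
noncomputable def leftOf (p q : ℝ × ℝ) : ZMod 2 :=
  if p.1 < q.1 then 1 else 0

open Classical in
/-- The indicator, modulo 2, of `s` lying strictly below some point of `S`. -/
noncomputable def below (S : Set (ℝ × ℝ)) (s : ℝ × ℝ) : ZMod 2 :=
  if ∃ y, s.2 < y ∧ (s.1, y) ∈ S then 1 else 0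

variable {p q s t : ℝ × ℝ} {S T : Set (ℝ × ℝ)}

theorem leftOf_add_leftOf_swap (h : p.1 ≠ q.1) : leftOf p q + leftOf q p = 1 := by
  unfold leftOf
  rcases h.lt_or_gt with h | h <;> simp [h, h.not_gt]

theorem image_fst_segment (p q : ℝ × ℝ) : Prod.fst '' segment ℝ p q = Set.uIcc p.1 q.1 := by
  rw [← segment_eq_uIcc]
  exact image_segment ℝ (LinearMap.fst ℝ ℝ ℝ).toAffineMap p q

open Classical in
theorem leftOf_add_leftOf (hp : p.1 ≠ s.1) (hq : q.1 ≠ s.1) :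
    leftOf p s + leftOf q s = if s.1 ∈ Set.uIcc p.1 q.1 then 1 else 0 := by
  unfold leftOf
  rw [Set.mem_uIcc]
  have : (1 : ZMod 2) + 1 = 0 := rfl
  grind

theorem below_eq_zero (h : s.1 ∉ Prod.fst '' S) : below S s = 0 :=
  if_neg fun ⟨y, _, hy⟩ => h ⟨(s.1, y), hy, rfl⟩

theorem forall_lt_or_forall_lt_of_convex (hS : Convex ℝ S) (hT : Convex ℝ T) (hST : Disjoint S T) :
    (∀ x y z, (x, y) ∈ S → (x, z) ∈ T → z < y) ∨ ∀ x y z, (x, y) ∈ S → (x, z) ∈ T → y < z := by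
  by_contra! ⟨⟨x₁, y₁, z₁, hy₁, hz₁, h₁⟩, x₂, y₂, z₂, hy₂, hz₂, h₂⟩
  have hne : ∀ x y, (x, y) ∈ S → (x, y) ∉ T := fun _ _ h => hST.notMem_of_mem_left h
  have h₁ : 0 < z₁ - y₁ := sub_pos.2 (h₁.lt_of_ne fun h => hne _ _ hy₁ (h ▸ hz₁))
  have h₂ : 0 < y₂ - z₂ := sub_pos.2 (h₂.lt_of_ne fun h => hne _ _ hy₂ (h ▸ hz₂))
  have hpos : 0 < (z₁ - y₁) + (y₂ - z₂) := add_pos h₁ h₂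
  have hsum : (y₂ - z₂) / ((z₁ - y₁) + (y₂ - z₂)) + (z₁ - y₁) / ((z₁ - y₁) + (y₂ - z₂)) = 1 := by
    field_simp
    ring
  have hmemS := hS hy₁ hy₂ (div_nonneg h₂.le hpos.le) (div_nonneg h₁.le hpos.le) hsum
  have hmemT := hT hz₁ hz₂ (div_nonneg h₂.le hpos.le) (div_nonneg h₁.le hpos.le) hsum
  refine hST.ne_of_mem hmemS hmemT ?_
  ext
  · rfl
  · simp only [Prod.snd_add, Prod.smul_snd, smul_eq_mul]
    ring

theorem below_add_below_of_forall_lt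
    (h : ∀ x y z, (x, y) ∈ segment ℝ p q → (x, z) ∈ segment ℝ s t → z < y)
    (hps : p.1 ≠ s.1) (hpt : p.1 ≠ t.1) (hqs : q.1 ≠ s.1) (hqt : q.1 ≠ t.1) :
    below (segment ℝ p q) s + below (segment ℝ p q) t + below (segment ℝ s t) p +
      below (segment ℝ s t) q = leftOf p s + leftOf q s + leftOf p t + leftOf q t := by
  have hzero : ∀ r ∈ segment ℝ p q, below (segment ℝ s t) r = 0 :=
    fun r hr => if_neg fun ⟨y, hy, hmem⟩ => (h r.1 r.2 y hr hmem).not_gt hy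
  have hbelow : ∀ r ∈ segment ℝ s t, p.1 ≠ r.1 → q.1 ≠ r.1 →
      below (segment ℝ p q) r = leftOf p r + leftOf q r := by
    intro r hr hpr hqr
    rw [leftOf_add_leftOf hpr hqr, ← image_fst_segment, below]
    congr 1
    refine propext ⟨fun ⟨y, _, hy⟩ => ⟨_, hy, rfl⟩, ?_⟩
    rintro ⟨⟨x, y⟩, hy, rfl : x = r.1⟩
    exact ⟨y, h _ _ _ hy hr, hy⟩
  rw [hzero p (left_mem_segment ℝ p q), hzero q (right_mem_segment ℝ p q),
    hbelow s (left_mem_segment ℝ s t) hps hqs, hbelow t (right_mem_segment ℝ s t) hpt hqt]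
  ring

theorem below_add_below (h : Disjoint (segment ℝ p q) (segment ℝ s t))
    (hps : p.1 ≠ s.1) (hpt : p.1 ≠ t.1) (hqs : q.1 ≠ s.1) (hqt : q.1 ≠ t.1) :
    below (segment ℝ p q) s + below (segment ℝ p q) t + below (segment ℝ s t) p +
      below (segment ℝ s t) q = leftOf p s + leftOf q s + leftOf p t + leftOf q t := by
  obtain h | h := forall_lt_or_forall_lt_of_convex (convex_segment p q) (convex_segment s t) h
  · exact below_add_below_of_forall_lt h hps hpt hqs hqt
  · have key := below_add_below_of_forall_lt (fun x y z hy hz => h x z y hz hy)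
      hps.symm hqs.symm hpt.symm hqt.symm
    linear_combination key + leftOf_add_leftOf_swap hps + leftOf_add_leftOf_swap hpt +
      leftOf_add_leftOf_swap hqs + leftOf_add_leftOf_swap hqt -
      CharTwo.add_self_eq_zero (leftOf p s + leftOf q s + leftOf p t + leftOf q t) +
      2 * CharTwo.add_self_eq_zero (1 : ZMod 2)

variable {V : Type*} {H : SimpleGraph V} {O : Set V} {P E : V → ℝ × ℝ}

/-- A straight-line drawing of `H` with vertices at `P`, together with a segment from `P a` to `E a`
for each vertex `a ∈ O` which meets no edge except at `P a` and leaves the vertical strip spanned by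
the drawing. The vertices have distinct first coordinates. -/
structure RayDrawing (H : SimpleGraph V) (O : Set V) (P E : V → ℝ × ℝ) : Prop where
  fst_ne : ∀ u v, u ≠ v → (P u).1 ≠ (P v).1
  leaves : ∀ a ∈ O, (∀ v, (P v).1 < (E a).1) ∨ ∀ v, (E a).1 < (P v).1
  disjoint_edge : ∀ p q s t, H.Adj p q → H.Adj s t → p ≠ s → p ≠ t → q ≠ s → q ≠ t →
    Disjoint (segment ℝ (P p) (P q)) (segment ℝ (P s) (P t))
  disjoint_ray : ∀ a ∈ O, ∀ s t, H.Adj s t → a ≠ s → a ≠ t →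
    Disjoint (segment ℝ (P a) (E a)) (segment ℝ (P s) (P t))

/-- `φ` counts, up to terms of `leftOf`, the edges of a path from `a` to `c` inside `A` that lie
above a vertex. Crossing an edge or a ray outside `A` changes it by the ends of the path only. -/
structure IsPotential (H : SimpleGraph V) (O : Set V) (P E : V → ℝ × ℝ) (A : Set V) (a c : V)
    (φ : V → ZMod 2) : Prop where
  add_eq : ∀ s t, H.Adj s t → s ∉ A → t ∉ A → φ s + φ t =
    below (segment ℝ (P s) (P t)) (P a) + below (segment ℝ (P s) (P t)) (P c)
  eq_ray : ∀ b ∈ O, b ∉ A → φ b =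
    below (segment ℝ (P b) (E b)) (P a) + below (segment ℝ (P b) (E b)) (P c)

namespace RayDrawing

theorem below_add_below_edge (hP : RayDrawing H O P E) {p q s t : V} (hpq : H.Adj p q)
    (hst : H.Adj s t) (hps : p ≠ s) (hpt : p ≠ t) (hqs : q ≠ s) (hqt : q ≠ t) :
    below (segment ℝ (P p) (P q)) (P s) + below (segment ℝ (P p) (P q)) (P t) +
      below (segment ℝ (P s) (P t)) (P p) + below (segment ℝ (P s) (P t)) (P q) =
      leftOf (P p) (P s) + leftOf (P q) (P s) + leftOf (P p) (P t) + leftOf (P q) (P t) :=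
  below_add_below (hP.disjoint_edge p q s t hpq hst hps hpt hqs hqt) (hP.fst_ne p s hps)
    (hP.fst_ne p t hpt) (hP.fst_ne q s hqs) (hP.fst_ne q t hqt)

theorem below_add_below_ray (hP : RayDrawing H O P E) {a s t : V} (ha : a ∈ O)
    (hst : H.Adj s t) (has : a ≠ s) (hat : a ≠ t) :
    below (segment ℝ (P a) (E a)) (P s) + below (segment ℝ (P a) (E a)) (P t) +
      below (segment ℝ (P s) (P t)) (P a) = leftOf (P a) (P s) + leftOf (P a) (P t) := by
  have hleft : leftOf (E a) (P s) = leftOf (E a) (P t) := by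
    unfold leftOf
    obtain h | h := hP.leaves a ha
    · rw [if_neg (h s).not_gt, if_neg (h t).not_gt]
    · rw [if_pos (h s), if_pos (h t)]
  have hzero : below (segment ℝ (P s) (P t)) (E a) = 0 := by
    refine below_eq_zero ?_
    rw [image_fst_segment, Set.mem_uIcc]
    grind [hP.leaves a ha]
  have hne : ∀ v, (E a).1 ≠ (P v).1 := by grind [hP.leaves a ha]
  have key := below_add_below (hP.disjoint_ray a ha s t hst has hat) (hP.fst_ne a s has)
    (hP.fst_ne a t hat) (hne s) (hne t)
  rw [hzero, hleft] at key
  linear_combination key + CharTwo.add_self_eq_zero (leftOf (E a) (P t))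

theorem exists_isPotential (hP : RayDrawing H O P E) {A : Set V} (hA : ConnectedOn H A) {a c : V}
    (ha : a ∈ A) (hc : c ∈ A) : ∃ φ, IsPotential H O P E A a c φ := by
  suffices A ⊆ {c | c ∈ A ∧ ∃ φ, IsPotential H O P E A a c φ} from (this hc).2
  refine hA.subset_of_closed ⟨a, ha, ha, 0, fun s t _ _ _ => ?_, fun b _ _ => ?_⟩ ?_
  · rw [CharTwo.add_self_eq_zero, Pi.zero_apply, Pi.zero_apply, add_zero]
  · rw [CharTwo.add_self_eq_zero, Pi.zero_apply]
  rintro x ⟨hx, φ, hφ⟩ y hy hxy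
  have hne : ∀ {v}, v ∉ A → x ≠ v ∧ y ≠ v :=
    fun hv => ⟨ne_of_mem_of_not_mem hx hv, ne_of_mem_of_not_mem hy hv⟩
  refine ⟨hy, fun v => φ v + below (segment ℝ (P x) (P y)) (P v) + leftOf (P x) (P v) +
    leftOf (P y) (P v), fun s t hst hs ht => ?_, fun b hb hbA => ?_⟩
  · have key := hP.below_add_below_edge hxy hst (hne hs).1 (hne ht).1 (hne hs).2 (hne ht).2
    grind [hφ.add_eq s t hst hs ht]
  · have key := hP.below_add_below_ray hb hxy (hne hbA).1.symm (hne hbA).2.symm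
    have hbx := leftOf_add_leftOf_swap (hP.fst_ne b x (hne hbA).1.symm)
    have hby := leftOf_add_leftOf_swap (hP.fst_ne b y (hne hbA).2.symm)
    grind [hφ.eq_ray b hb hbA]

theorem crossingParity (hP : RayDrawing H O P E) :
    CrossingParity H O fun a b => below (segment ℝ (P a) (E a)) (P b) +
      below (segment ℝ (P b) (E b)) (P a) + leftOf (P a) (P b) where
  add_swap a _ b _ hab := by
    linear_combination leftOf_add_leftOf_swap (hP.fst_ne a b hab) +
      CharTwo.add_self_eq_zero (below (segment ℝ (P a) (E a)) (P b) +
        below (segment ℝ (P b) (E b)) (P a))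
  sum_eq_zero A B hA hB hAB a ha c hc b hb d hd := by
    obtain ⟨φ, hφ⟩ := hP.exists_isPotential hA ha.1 hc.1
    have hBA : ∀ {v}, v ∈ B → v ∉ A := fun hv => hAB.notMem_of_mem_right hv
    let f : V → ZMod 2 := fun v => φ v +
      (below (segment ℝ (P a) (E a)) (P v) + leftOf (P a) (P v)) +
      (below (segment ℝ (P c) (E c)) (P v) + leftOf (P c) (P v))
    have hf : B ⊆ {v | v ∈ B ∧ f v = f b} := by
      refine hB.subset_of_closed ⟨b, hb.1, hb.1, rfl⟩ ?_
      rintro u ⟨hu, hub⟩ v hv huv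
      have hne : ∀ {w z}, w ∈ A → z ∈ B → w ≠ z := fun hw hz => hAB.ne_of_mem hw hz
      have ha := hP.below_add_below_ray ha.2 huv (hne ha.1 hu) (hne ha.1 hv)
      have hc := hP.below_add_below_ray hc.2 huv (hne hc.1 hu) (hne hc.1 hv)
      exact ⟨hv, by grind [hφ.add_eq u v huv (hBA hu) (hBA hv)]⟩
    have hfd : f d = f b := (hf hd.1).2
    grind [hφ.eq_ray b hb.2 (hBA hb.1), hφ.eq_ray d hd.2 (hBA hd.1)]

end RayDrawing

end Drawing

section GeneralPosition

variable {V : Type} {G : SimpleGraph V}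

theorem exists_injective_fst_ne_zero {S : Set (ℝ × ℝ)} (hS : S.Finite) (h0 : 0 ∉ S) :
    ∃ φ : ℝ × ℝ →ₗ[ℝ] ℝ × ℝ, Function.Injective φ ∧ ∀ w ∈ S, (φ w).1 ≠ 0 := by
  obtain ⟨ε, hε⟩ := (hS.image fun w => -w.1 / w.2).infinite_compl.nonempty
  let φ : ℝ × ℝ →ₗ[ℝ] ℝ × ℝ := (.fst ℝ ℝ ℝ + ε • .snd ℝ ℝ ℝ : ℝ × ℝ →ₗ[ℝ] ℝ).prod (.snd ℝ ℝ ℝ)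
  have hφ : ∀ w, φ w = (w.1 + ε * w.2, w.2) := fun _ => rfl
  refine ⟨φ, fun v w hvw => ?_, fun w hw h => ?_⟩
  · grind
  rw [hφ] at h
  obtain h2 | h2 := eq_or_ne w.2 0
  · have h1 : w.1 = 0 := by simpa [h2] using h
    have hw0 : w = 0 := Prod.ext h1 h2
    exact h0 (hw0 ▸ hw)
  · exact hε ⟨w, hw, by field_simp; linarith⟩

theorem exists_pos_forall_lt_or_forall_gt {ι : Type*} [Finite ι] (X : ι → ℝ) (x : ℝ) {c : ℝ}
    (hc : c ≠ 0) : ∃ T > 0, (∀ i, X i < x + T * c) ∨ ∀ i, x + T * c < X i := by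
  obtain hc | hc := hc.lt_or_gt
  · have h := Filter.tendsto_atBot_add_const_left Filter.atTop x
      (Filter.tendsto_id.atTop_mul_const_of_neg hc)
    obtain ⟨T, hT, hlt⟩ := ((Filter.eventually_gt_atTop 0).and
      (Filter.eventually_all.2 fun i => h.eventually_lt_atBot (X i))).exists
    exact ⟨T, hT, .inr hlt⟩
  · have h := Filter.tendsto_atTop_add_const_left Filter.atTop x
      (Filter.tendsto_id.atTop_mul_const hc)
    obtain ⟨T, hT, hlt⟩ := ((Filter.eventually_gt_atTop 0).and
      (Filter.eventually_all.2 fun i => h.eventually_gt_atTop (X i))).exists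
    exact ⟨T, hT, .inl hlt⟩

theorem disjoint_segment_edge (emb : StraightEmbedding G) {p q s t : V} (hpq : G.Adj p q)
    (hst : G.Adj s t) (hps : p ≠ s) (hpt : p ≠ t) (hqs : q ≠ s) (hqt : q ≠ t) :
    Disjoint (segment ℝ (emb.pos p) (emb.pos q)) (segment ℝ (emb.pos s) (emb.pos t)) := by
  have hne : s(p, q) ≠ s(s, t) := by grind
  refine Set.disjoint_left.2 fun x hx hx' => ?_
  obtain ⟨v, ⟨hv, hv'⟩, -⟩ := emb.no_cross p q s t hpq hst hne ⟨hx, hx'⟩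
  grind

theorem disjoint_segment_ray (emb : StraightEmbedding G) {a s t : V} (hst : G.Adj s t)
    (has : a ≠ s) (hat : a ≠ t) {d : ℝ × ℝ}
    (hd : ∀ r : ℝ, 0 < r → emb.pos a + r • d ∉ segment ℝ (emb.pos s) (emb.pos t)) {T : ℝ}
    (hT : 0 < T) :
    Disjoint (segment ℝ (emb.pos a) (emb.pos a + T • d))
      (segment ℝ (emb.pos s) (emb.pos t)) := by
  rw [segment_eq_image']
  refine Set.disjoint_left.2 ?_
  rintro _ ⟨θ, ⟨hθ, -⟩, rfl⟩
  obtain rfl | hθ := hθ.eq_or_lt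
  · simpa using emb.vertex_off_edge a s t hst has hat
  · simpa [mul_smul] using hd (θ * T) (mul_pos hθ hT)

theorem exists_rayDrawing [Finite V] (emb : StraightEmbedding G) :
    ∃ P E, RayDrawing G {v | OnOuterFace emb v} P E := by
  classical
  have hray : ∀ v, ∃ d : ℝ × ℝ, d ≠ 0 ∧ (OnOuterFace emb v → ∀ t : ℝ, 0 < t → ∀ a b : V,
      G.Adj a b → emb.pos v + t • d ∉ segment ℝ (emb.pos a) (emb.pos b)) := by
    intro v
    by_cases hv : OnOuterFace emb v
    · obtain ⟨d, hd0, hd⟩ := hv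
      exact ⟨d, hd0, fun _ => hd⟩
    · exact ⟨(1, 0), by simp, fun h => absurd h hv⟩
  choose d hd0 hd using hray
  obtain ⟨φ, hφ, hfst⟩ := exists_injective_fst_ne_zero
    (S := Set.range d ∪ (fun p : V × V => emb.pos p.1 - emb.pos p.2) '' {p | p.1 ≠ p.2})
    (Set.toFinite _) (by
      rintro (⟨v, hv⟩ | ⟨p, hp, hv⟩)
      · exact hd0 v hv
      · exact hp (emb.inj (sub_eq_zero.1 hv)))
  have hdisj : ∀ {p q s t : ℝ × ℝ}, Disjoint (segment ℝ p q) (segment ℝ s t) →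
      Disjoint (segment ℝ (φ p) (φ q)) (segment ℝ (φ s) (φ t)) := by
    intro p q s t h
    have hmap : ∀ u v, φ '' segment ℝ u v = segment ℝ (φ u) (φ v) := image_segment ℝ φ.toAffineMap
    rw [← hmap, ← hmap]
    exact (Set.disjoint_image_iff hφ).2 h
  choose T hT hleaves using fun v => exists_pos_forall_lt_or_forall_gt (fun u => (φ (emb.pos u)).1)
    (φ (emb.pos v)).1 (hfst (d v) (.inl ⟨v, rfl⟩))
  refine ⟨fun v => φ (emb.pos v), fun v => φ (emb.pos v + T v • d v), ?_, ?_, ?_, ?_⟩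
  · intro u v huv h
    refine hfst _ (.inr ⟨(u, v), huv, rfl⟩) ?_
    rw [map_sub, Prod.fst_sub, h, sub_self]
  · intro v _
    rw [map_add, map_smul]
    exact hleaves v
  · intro p q s t hpq hst hps hpt hqs hqt
    exact hdisj (disjoint_segment_edge emb hpq hst hps hpt hqs hqt)
  · intro a ha s t hst has hat
    exact hdisj (disjoint_segment_ray emb hst has hat (fun r hr => hd a ha r hr s t hst) (hT a))

end GeneralPosition

theorem Decomposable.of_onOuterFace {V : Type} [Finite V] {G : SimpleGraph V}
    (emb : StraightEmbedding G) {n : ℕ}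
    (h : Decomposable G n {v | ¬ OnOuterFace emb v} ∅) : Decomposable G (n + 3) Set.univ ∅ := by
  obtain ⟨P, E, hP⟩ := exists_rayDrawing emb
  refine hP.crossingParity.decomposable ?_
  rwa [← Set.compl_eq_univ_sdiff]

theorem decomposable_of_isKOuterplanar {V : Type} [Finite V] {G : SimpleGraph V} :
    ∀ {k}, IsKOuterplanar k V G → Decomposable G (3 * k) Set.univ ∅
  | 1, ⟨emb, hemb⟩ => by
    refine .of_onOuterFace emb ?_
    convert Decomposable.empty ∅
    simpa [Set.eq_empty_iff_forall_notMem] using hemb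
  | k + 2, ⟨emb, hemb⟩ => by
    refine .of_onOuterFace emb (n := 3 * (k + 1)) ?_
    simpa using (decomposable_of_isKOuterplanar hemb).map_induce

end KOuterplanar

/-- every `k`-outerplanar graph has treewidth at most `3k - 1`. -/
theorem kOuterplanar_treewidth {V : Type} [Fintype V] (G : SimpleGraph V) (k : ℕ)
    (h : IsKOuterplanar k V G) : TreewidthLE G (3 * k - 1) := by
  have hk : k ≠ 0 := by
    rintro rfl
    exact h
  apply KOuterplanar.Decomposable.treewidthLE
  rw [Nat.sub_add_cancel (by omega)]
  exact KOuterplanar.decomposable_of_isKOuterplanar h
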